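/- Let S₀, S₁ and S₂ be three simply connected compact subsets of the plane ℝ² such that the intersection of any two of them is path connected and the intersection S₀ ∩ S₁ ∩ S₂ is nonempty. Then S₀ ∩ S₁ ∩ S₂ is simply connected. -/

import Mathlib

/-!
A simply connected plane set contains, with a path, the filled hull of this path: the path together
with the bounded components of its complement. Indeed, for `p` off the set, `z - p` has a continuous
logarithm along the path, whereas it has none if `p` lies in a hole. It thus suffices to work inside
hulls of paths, which are compact, filled and uniformly locally path connected.

On a filled compactum every 1-cocycle of sufficiently small scale is a coboundary, whatever the
group: the squares of a fine grid that meet the compactum do not surround any square far from it, so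
labels of the edges of the grid that are trivial around these squares can be extended, square by
square, to all squares of a large box. This has two consequences.

* With integer coefficients it is a Mayer–Vietoris argument: every locally constant function on
  `Z₀ ∩ Z₁ ∩ Z₂` splits into locally constant functions on the pairwise intersections, so points in
  the same component of each `Zᵢ ∩ Zⱼ` are in the same component of `Z₀ ∩ Z₁ ∩ Z₂`. Replacing one of
  the sets by a small disk shows that this component is also uniformly locally connected, hence path
  connected.
* With coefficients in the quotient of the fundamental group of the hull by the loops that bound
  patchworks of disks of size `ε`, it shows that this quotient is trivial. So every loop contracts
  within `ε` of its hull, and correcting the contraction at the scales `1, 1/2, 1/4, …` gives in the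
  limit a contraction inside the hull.
-/

section FilledHull

open Set Bornology

variable {X : Type*} [TopologicalSpace X] [Bornology X] {K L Y Z : Set X} {p q : X}

/-- The set `K` together with the holes of `K`, that is, with the bounded path components of its
complement. A point of `K` belongs to it because its path component in `Kᶜ` is empty. -/
def filledHull (K : Set X) : Set X := {p | IsBounded (pathComponentIn Kᶜ p)}

theorem mem_filledHull : p ∈ filledHull K ↔ IsBounded (pathComponentIn Kᶜ p) := Iff.rfl

/-- A set without holes: every bounded path component of its complement is empty. -/
def IsFilled (Y : Set X) : Prop := filledHull Y ⊆ Y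

theorem mem_filledHull_of_joinedIn (hp : p ∈ filledHull K) (h : JoinedIn Kᶜ p q) :
    q ∈ filledHull K := by
  rwa [mem_filledHull, pathComponentIn_congr h]

theorem subset_filledHull (K : Set X) : K ⊆ filledHull K := fun p hp ↦ by
  have h : pathComponentIn Kᶜ p = ∅ := eq_empty_of_forall_notMem fun q hq ↦ hq.source_mem hp
  rw [mem_filledHull, h]
  exact isBounded_empty

theorem filledHull_mono (h : K ⊆ L) : filledHull K ⊆ filledHull L := fun _ hp ↦
  hp.subset (pathComponentIn_mono (compl_subset_compl.2 h))

theorem filledHull_subset (h : K ⊆ L) (hL : IsFilled L) : filledHull K ⊆ L :=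
  (filledHull_mono h).trans hL

theorem IsFilled.inter (hY : IsFilled Y) (hZ : IsFilled Z) : IsFilled (Y ∩ Z) :=
  subset_inter (filledHull_subset inter_subset_left hY) (filledHull_subset inter_subset_right hZ)

theorem isFilled_filledHull (K : Set X) : IsFilled (filledHull K) := fun p hp ↦ by
  by_contra hpK
  refine hpK (hp.subset ?_)
  have hpK' : p ∈ Kᶜ := fun h ↦ hpK (subset_filledHull K h)
  refine (isPathConnected_pathComponentIn hpK').subset_pathComponentIn
    (mem_pathComponentIn_self hpK') fun q hq hqK ↦ hpK ?_
  exact mem_filledHull_of_joinedIn hqK (JoinedIn.symm hq)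

theorem isClosed_filledHull [LocallyPathConnectedSpace X] (hK : IsClosed K) :
    IsClosed (filledHull K) := by
  refine isOpen_compl_iff.1 (isOpen_iff_mem_nhds.2 fun p hp ↦ ?_)
  have hpK : p ∈ Kᶜ := fun h ↦ hp (subset_filledHull K h)
  filter_upwards [(hK.isOpen_compl.pathComponentIn p).mem_nhds (mem_pathComponentIn_self hpK)]
    with q hq hqK
  exact hp (mem_filledHull_of_joinedIn hqK (JoinedIn.symm hq))

end FilledHull

section UniformlyLocPathConnected

open Set Metric

/-- The set `Y` is uniformly locally path connected: any two of its sufficiently close points are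
joined by a path in `Y` of small diameter. -/
def IsUniformlyLocPathConnected {X : Type*} [PseudoMetricSpace X] (Y : Set X) : Prop :=
  ∀ ε > 0, ∃ δ > 0, ∀ p ∈ Y, ∀ q ∈ Y, dist p q < δ → JoinedIn (Y ∩ closedBall p ε) p q

theorem isUniformlyLocPathConnected_range {X Y : Type*} [TopologicalSpace X] [CompactSpace X]
    [LocallyPathConnectedSpace X] [MetricSpace Y] {f : X → Y} (hf : Continuous f) :
    IsUniformlyLocPathConnected (range f) := by
  intro ε hε
  have hcont : Continuous fun z : X × X ↦ dist (f z.1) (f z.2) := by fun_prop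
  have hjoin : {z : X × X | JoinedIn (range f ∩ closedBall (f z.1) ε) (f z.1) (f z.2)} ∈
      Filter.comap (fun z : X × X ↦ dist (f z.1) (f z.2)) (nhds 0) := by
    rw [hcont.isClosedMap.comap_nhds_eq hcont, mem_nhdsSet_iff_forall]
    rintro ⟨s, t⟩ hst
    have hst : f s = f t := dist_eq_zero.1 hst
    have hball (r : X) : ∃ U ∈ nhds r, IsPathConnected U ∧ U ⊆ f ⁻¹' ball (f r) (ε / 2) := by
      obtain ⟨U, ⟨hU, hUc⟩, hUf⟩ := (path_connected_basis r).mem_iff.1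
        (hf.continuousAt.preimage_mem_nhds (ball_mem_nhds (f r) (half_pos hε)))
      exact ⟨U, hU, hUc, hUf⟩
    obtain ⟨U, hU, hUc, hUf⟩ := hball s
    obtain ⟨V, hV, hVc, hVf⟩ := hball t
    filter_upwards [prod_mem_nhds hU hV] with ⟨a, b⟩ ⟨ha, hb⟩
    have hclose {W : Set X} (hW : W ⊆ f ⁻¹' ball (f s) (ε / 2)) :
        f '' W ⊆ range f ∩ closedBall (f a) ε := by
      rintro _ ⟨c, hc, rfl⟩
      refine ⟨mem_range_self c, ?_⟩
      have hcs := mem_ball.1 (hW hc)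
      have has := mem_ball.1 (hUf ha)
      rw [mem_closedBall]
      linarith [dist_triangle_right (f c) (f a) (f s)]
    have hUj := (hUc.image hf).joinedIn _ ⟨a, ha, rfl⟩ _ ⟨s, mem_of_mem_nhds hU, rfl⟩
    have hVj := (hVc.image hf).joinedIn _ ⟨t, mem_of_mem_nhds hV, rfl⟩ _ ⟨b, hb, rfl⟩
    exact (hUj.mono (hclose hUf)).trans ((hst ▸ hVj).mono (hclose (hst ▸ hVf)))
  obtain ⟨δ, hδ, h⟩ := (nhds_basis_ball.comap _).mem_iff.1 hjoin
  refine ⟨δ, hδ, ?_⟩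
  rintro _ ⟨s, rfl⟩ _ ⟨t, rfl⟩ hst
  exact h (show (s, t) ∈ _ by simpa using hst)

instance : ContractibleSpace unitInterval :=
  (convex_Icc (0 : ℝ) 1).contractibleSpace ⟨0, unitInterval.zero_mem⟩

instance : LocallyPathConnectedSpace unitInterval :=
  (isQuotientMap_projIcc (h := zero_le_one)).locallyPathConnectedSpace

variable {E : Type*} [NormedAddCommGroup E] [NormedSpace ℝ E] {K Y : Set E} {p q : E}

theorem isFilled_of_convex (hY : Convex ℝ Y) (hne : Y.Nonempty) : IsFilled Y := by
  intro p hp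
  by_contra hpY
  obtain ⟨c, hc⟩ := hne
  have hpc : 0 < dist c p := dist_pos.2 fun h ↦ hpY (h ▸ hc)
  have hray (t : ℝ) (ht : 1 ≤ t) : AffineMap.lineMap c p t ∉ Y := fun h ↦ hpY <| by
    have := hY.lineMap_mem hc h (t := t⁻¹) ⟨by positivity, inv_le_one_of_one_le₀ ht⟩
    simpa [AffineMap.lineMap_lineMap_right,
      inv_mul_cancel₀ (zero_lt_one.trans_le ht).ne'] using this
  have hjoin (t : ℝ) (ht : 1 ≤ t) : AffineMap.lineMap c p t ∈ pathComponentIn Yᶜ p := by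
    refine ((convex_Ici (1 : ℝ)).isPathConnected ⟨1, self_mem_Ici⟩ |>.image
      AffineMap.lineMap_continuous).subset_pathComponentIn (x := p) ⟨1, by simp⟩ ?_ ⟨t, ht, rfl⟩
    rintro _ ⟨s, hs, rfl⟩
    exact hray s hs
  obtain ⟨R, hR⟩ := hp.subset_closedBall c
  have hmem := hR (hjoin (max 1 ((R + 1) / dist c p)) (le_max_left _ _))
  rw [mem_closedBall, dist_lineMap_left, Real.norm_of_nonneg (by positivity)] at hmem
  have := (div_le_iff₀ hpc).1 (le_max_right 1 ((R + 1) / dist c p))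
  linarith

theorem isCompact_filledHull [ProperSpace E] (hK : IsCompact K) : IsCompact (filledHull K) := by
  obtain ⟨R, hR⟩ := hK.isBounded.subset_closedBall 0
  have hsub : filledHull K ⊆ closedBall 0 |R| :=
    filledHull_subset (hR.trans (closedBall_subset_closedBall (le_abs_self R)))
      (isFilled_of_convex (convex_closedBall _ _) (nonempty_closedBall.2 (abs_nonneg R)))
  exact (isCompact_closedBall _ _).of_isClosed_subset (isClosed_filledHull hK.isClosed) hsub

theorem dist_le_of_mem_segment {a : E} (ha : a ∈ segment ℝ p q) : dist p a ≤ dist p q := by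
  linarith [dist_add_dist_of_mem_segment ha, dist_nonneg (x := a) (y := q)]

theorem isCompact_segment (p q : E) : IsCompact (segment ℝ p q) := by
  rw [segment_eq_image_lineMap]
  exact isCompact_Icc.image AffineMap.lineMap_continuous

theorem segment_subset_filledHull (hp : p ∈ filledHull K) (h : segment ℝ p q ⊆ Kᶜ) :
    segment ℝ p q ⊆ filledHull K := fun _ hz ↦
  mem_filledHull_of_joinedIn hp <| .of_segment_subset <|
    ((convex_segment p q).segment_subset (left_mem_segment ℝ p q) hz).trans h

theorem exists_segment_subset_filledHull (hK : IsClosed K) (hp : p ∈ filledHull K)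
    (h : (segment ℝ p q ∩ K).Nonempty) :
    ∃ a ∈ segment ℝ p q ∩ K, segment ℝ p a ⊆ filledHull K := by
  obtain ⟨a, ha, hmin⟩ := ((isCompact_segment p q).inter_right hK).exists_isMinOn h
    (f := dist p) (by fun_prop)
  refine ⟨a, ha, fun z hz ↦ ?_⟩
  obtain rfl | hza := eq_or_ne z a
  · exact subset_filledHull K ha.2
  have hsub := (convex_segment p q).segment_subset (left_mem_segment ℝ p q) ha.1
  refine segment_subset_filledHull hp (fun w hw hwK ↦ ?_) (right_mem_segment ℝ p z)
  have hwq : w ∈ segment ℝ p q :=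
    (convex_segment p q).segment_subset (left_mem_segment ℝ p q) (hsub hz) hw
  have hle : dist p a ≤ dist p w := hmin ⟨hwq, hwK⟩
  linarith [dist_le_of_mem_segment hw, dist_add_dist_of_mem_segment hz, dist_pos.2 hza]

theorem isUniformlyLocPathConnected_filledHull (hK : IsClosed K)
    (h : IsUniformlyLocPathConnected K) : IsUniformlyLocPathConnected (filledHull K) := by
  intro ε hε
  obtain ⟨δ, hδ, hjoin⟩ := h (ε / 2) (half_pos hε)
  refine ⟨min δ (ε / 2), by positivity, fun p hp q hq hpq ↦ ?_⟩
  obtain ⟨hpqδ, hpqε⟩ := lt_min_iff.1 hpq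
  have hball : segment ℝ p q ⊆ closedBall p ε := fun z hz ↦ by
    rw [mem_closedBall']
    linarith [dist_le_of_mem_segment hz]
  have hsub {z w : E} (hz : z ∈ segment ℝ p q) (hw : w ∈ segment ℝ p q) :=
    ((convex_segment (𝕜 := ℝ) p q).segment_subset hz hw).trans hball
  by_cases hm : (segment ℝ p q ∩ K).Nonempty
  swap
  · exact .of_segment_subset (subset_inter
      (segment_subset_filledHull hp fun w hw hwK ↦ hm ⟨w, hw, hwK⟩) hball)
  obtain ⟨a, ⟨ha, haK⟩, hpa⟩ := exists_segment_subset_filledHull hK hp hm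
  obtain ⟨b, ⟨hb, hbK⟩, hqb⟩ := exists_segment_subset_filledHull hK hq (by rwa [segment_symm])
  have hbq := hb
  rw [segment_symm] at hb
  have hab : dist a b ≤ dist p q := by
    have hcb := (convex_closedBall b (dist p q)).segment_subset (x := p) (y := q) ?_ ?_ ha
    · exact hcb
    · rw [mem_closedBall]
      exact dist_le_of_mem_segment hb
    · rw [mem_closedBall, dist_comm p q]
      exact dist_le_of_mem_segment hbq
  have hpa' : JoinedIn (filledHull K ∩ closedBall p ε) p a :=
    .of_segment_subset (subset_inter hpa (hsub (left_mem_segment ℝ p q) ha))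
  have hbq' : JoinedIn (filledHull K ∩ closedBall p ε) b q :=
    (JoinedIn.of_segment_subset (subset_inter hqb (hsub (right_mem_segment ℝ p q) hb))).symm
  refine hpa'.trans ((hjoin a haK b hbK (hab.trans_lt hpqδ)).mono ?_ |>.trans hbq')
  refine inter_subset_inter (subset_filledHull K) (closedBall_subset_closedBall' ?_)
  rw [dist_comm]
  linarith [dist_le_of_mem_segment ha]

theorem isPathConnected_filledHull [Nontrivial E] (hK : IsClosed K) (h : IsPathConnected K) :
    IsPathConnected (filledHull K) := by
  have hjoin (p) (hp : p ∈ filledHull K) : ∃ a ∈ K, JoinedIn (filledHull K) p a := by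
    obtain ⟨q, hq⟩ : ∃ q, q ∉ pathComponentIn Kᶜ p := by
      by_contra! hall
      exact NormedSpace.unbounded_univ ℝ E (hp.subset fun q _ ↦ hall q)
    have hm : (segment ℝ p q ∩ K).Nonempty := by
      by_contra hm
      exact hq (.of_segment_subset fun w hw hwK ↦ hm ⟨w, hw, hwK⟩)
    obtain ⟨a, ⟨_, haK⟩, ha⟩ := exists_segment_subset_filledHull hK hp hm
    exact ⟨a, haK, .of_segment_subset ha⟩
  obtain ⟨x, hx, hxK⟩ := h
  refine ⟨x, subset_filledHull K hx, fun {y} hy ↦ ?_⟩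
  obtain ⟨a, ha, hya⟩ := hjoin y hy
  exact ((hxK ha).mono (subset_filledHull K)).trans hya.symm

end UniformlyLocPathConnected

section Logarithms

open Set Metric Complex unitInterval

variable {X : Type*} [TopologicalSpace X]

theorem exists_continuous_exp_eq [SimplyConnectedSpace X] [LocallyPathConnectedSpace X]
    {g : X → ℂ} (hg : Continuous g) (hg₀ : ∀ x, g x ≠ 0) :
    ∃ L : X → ℂ, Continuous L ∧ ∀ x, exp (L x) = g x := by
  obtain ⟨x⟩ : Nonempty X := inferInstance
  obtain ⟨L, ⟨-, hL⟩, -⟩ := isCoveringMapOn_exp.existsUnique_continuousMap_lifts ⟨g, hg⟩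
    (a₀ := x) (exp_log (hg₀ x)) hg₀
  exact ⟨L, L.continuous, congrFun hL⟩

theorem eq_of_exp_eq_comp_loop [SimplyConnectedSpace X] {g : X → ℂ} (hg : Continuous g)
    (hg₀ : ∀ x, g x ≠ 0) {a : X} (γ : Path a a) {L : I → ℂ} (hL : Continuous L)
    (hexp : ∀ t, exp (L t) = g (γ t)) : L 0 = L 1 := by
  let G : C(X, {z : ℂ // z ≠ 0}) := ⟨fun x ↦ ⟨g x, hg₀ x⟩, by fun_prop⟩
  have hhom : (G.comp γ.toContinuousMap).HomotopicRel
      (G.comp (Path.refl a).toContinuousMap) {0, 1} :=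
    ContinuousMap.HomotopicRel.comp_continuousMap
      (SimplyConnectedSpace.paths_homotopic γ (Path.refl a)) G
  have hL₀ : exp (L 0) = g a := by simp [hexp]
  have hlift := isCoveringMap_exp.liftPath_apply_one_eq_of_homotopicRel hhom (L 0)
    (Subtype.ext (by simp [G, hL₀])) (Subtype.ext (by simp [G, hL₀]))
  have hLlift := (isCoveringMap_exp.eq_liftPath_iff' (γ := G.comp γ.toContinuousMap)
    (e := L 0) (γ_0 := Subtype.ext (by simp [G, hL₀])) (Γ := ⟨L, hL⟩)).2
      ⟨funext fun t ↦ Subtype.ext (hexp t), rfl⟩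
  have hconst := (isCoveringMap_exp.eq_liftPath_iff'
    (γ := G.comp (Path.refl a).toContinuousMap) (e := L 0)
    (γ_0 := Subtype.ext (by simp [G, hL₀])) (Γ := .const I (L 0))).2
      ⟨funext fun t ↦ Subtype.ext (by simp [G, hL₀]), rfl⟩
  rw [← hLlift, ← hconst] at hlift
  exact hlift.symm

theorem eq_of_exp_eq_comp_path [SimplyConnectedSpace X] {g : X → ℂ} (hg : Continuous g)
    (hg₀ : ∀ x, g x ≠ 0) {a b : X} (γ : Path a b) {L : I → ℂ} (hL : Continuous L)
    (hexp : ∀ t, exp (L t) = g (γ t)) {s t : I} (hst : γ s = γ t) : L s = L t := by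
  have := eq_of_exp_eq_comp_loop hg hg₀ ((γ.subpath s t).cast rfl hst)
    (L := L ∘ Icc.convexComb s t) (by fun_prop) fun r ↦ hexp _
  simpa using this

theorem frontier_pathComponentIn_compl_subset [LocallyPathConnectedSpace X] {K : Set X}
    (hK : IsClosed K) (p : X) : frontier (pathComponentIn Kᶜ p) ⊆ K := fun z hz ↦ by
  by_contra hzK
  have hopen := hK.isOpen_compl.pathComponentIn
  rw [(hopen p).frontier_eq] at hz
  obtain ⟨w, hzw, hpw⟩ := mem_closure_iff.1 hz.1 _ (hopen z) (mem_pathComponentIn_self hzK)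
  exact hz.2 (JoinedIn.trans hpw (JoinedIn.symm hzw))

theorem not_exists_log_sub_on_sphere (p : ℂ) {r : ℝ} (hr : 0 < r) :
    ¬ ∃ L : ℂ → ℂ, Continuous L ∧ ∀ z ∈ sphere p r, exp (L z) = z - p := by
  rintro ⟨L, hL, hexp⟩
  have hconst (θ : ℝ) : exp (L (circleMap p r θ) - θ * Complex.I) = r := by
    rw [exp_sub, hexp _ (circleMap_mem_sphere p hr.le θ), circleMap, add_sub_cancel_left,
      mul_div_cancel_right₀ _ (exp_ne_zero _)]
  have hcont : Continuous fun θ : ℝ ↦ L (circleMap p r θ) - θ * Complex.I := by fun_prop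
  have heq := isCoveringMap_exp.const_of_comp hcont
    (fun s t ↦ Subtype.ext ((hconst s).trans (hconst t).symm)) 0 (2 * Real.pi)
  rw [show circleMap p r (2 * Real.pi) = circleMap p r 0 by simp [circleMap]] at heq
  refine two_pi_I_ne_zero ?_
  push_cast at heq
  linear_combination heq

-- Eilenberg's criterion: the bounded component of `p` would let one extend a logarithm of `z - p`
-- from `K` to the whole plane, after replacing `z - p` by a nowhere vanishing function there.
theorem notMem_filledHull_of_exp_eq_sub {K : Set ℂ} (hK : IsClosed K) {p : ℂ} (L : C(K, ℂ))
    (hexp : ∀ z, exp (L z) = z - p) : p ∉ filledHull K := by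
  classical
  intro hp
  have hpK : p ∈ Kᶜ := fun h ↦ exp_ne_zero _ ((hexp ⟨p, h⟩).trans (sub_self p))
  obtain ⟨M, rfl⟩ := ContinuousMap.exists_restrict_eq hK L
  let V := pathComponentIn Kᶜ p
  let g : ℂ → ℂ := fun z ↦ if z ∈ V then exp (M z) else z - p
  have hg : Continuous g := Continuous.if
    (fun z hz ↦ hexp ⟨z, frontier_pathComponentIn_compl_subset hK p hz⟩) (by fun_prop) (by fun_prop)
  have hg₀ (z : ℂ) : g z ≠ 0 := by
    by_cases hz : z ∈ V
    · simpa only [g, if_pos hz] using exp_ne_zero _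
    · rw [show g z = z - p from if_neg hz, sub_ne_zero]
      rintro rfl
      exact hz (mem_pathComponentIn_self hpK)
  obtain ⟨Λ, hΛ, hΛexp⟩ := exists_continuous_exp_eq hg hg₀
  obtain ⟨R, hR, hVR⟩ : ∃ R > 0, V ⊆ ball p R :=
    (mem_filledHull.1 hp).subset_ball_lt 0 p
  refine not_exists_log_sub_on_sphere p hR ⟨Λ, hΛ, fun z hz ↦ ?_⟩
  have hzV : z ∉ V := fun h ↦ (mem_ball.1 (hVR h)).ne (mem_sphere.1 hz)
  rw [hΛexp, show g z = z - p from if_neg hzV]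

theorem filledHull_range_path_subset {S : Set ℂ} [SimplyConnectedSpace S] {x y : S}
    (γ : Path x y) : filledHull (range fun t ↦ (γ t : ℂ)) ⊆ S := by
  intro p hp
  by_contra hpS
  have hγ : Continuous fun t ↦ (γ t : ℂ) := by fun_prop
  have hS (z : S) : (z : ℂ) - p ≠ 0 := sub_ne_zero.2 fun h ↦ hpS (h ▸ z.2)
  obtain ⟨L, hL, hexp⟩ := exists_continuous_exp_eq
    (g := fun t ↦ (γ t : ℂ) - p) (by fun_prop) fun t ↦ hS (γ t)
  let q : C(I, range fun t ↦ (γ t : ℂ)) := ⟨rangeFactorization _, by fun_prop⟩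
  have hq : Topology.IsQuotientMap q :=
    q.continuous.isClosedMap.isQuotientMap q.continuous rangeFactorization_surjective
  have hfactor : Function.FactorsThrough L q := fun s t hst ↦ by
    have hγst := congrArg Subtype.val hst
    exact eq_of_exp_eq_comp_path (g := fun z : S ↦ (z : ℂ) - p) (by fun_prop) hS γ hL hexp
      (Subtype.ext hγst)
  refine notMem_filledHull_of_exp_eq_sub (isCompact_range hγ).isClosed
    (hq.lift ⟨L, hL⟩ hfactor) (fun z ↦ ?_) hp
  obtain ⟨t, rfl⟩ := hq.surjective z
  have : hq.lift ⟨L, hL⟩ hfactor (q t) = L t :=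
    DFunLike.congr_fun (hq.lift_comp ⟨L, hL⟩ hfactor) t
  rw [this, hexp]
  rfl

end Logarithms

section GridLabelings

variable {G : Type*} [Group G] {X : Set (ℤ × ℤ)} {s t : ℤ × ℤ} {h v u : ℤ → ℤ → G}

/-- The labels of the four edges of the unit square with lower left corner `p` multiply to `1`.
Here `h i j` is the label of the horizontal edge from `(i, j)` to `(i + 1, j)` and `v i j` that of
the vertical edge from `(i, j)` to `(i, j + 1)`. -/
def IsFlatAt (h v : ℤ → ℤ → G) (p : ℤ × ℤ) : Prop :=
  h p.1 p.2 * v (p.1 + 1) p.2 = v p.1 p.2 * h p.1 (p.2 + 1)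

/-- The vertex labels `u` are a potential of the edge labels `h`, `v` along the four edges of the
unit square with lower left corner `p`. -/
def IsPotentialAt (h v u : ℤ → ℤ → G) (p : ℤ × ℤ) : Prop :=
  (u p.1 p.2 * h p.1 p.2 = u (p.1 + 1) p.2 ∧ u p.1 p.2 * v p.1 p.2 = u p.1 (p.2 + 1)) ∧
    u (p.1 + 1) p.2 * v (p.1 + 1) p.2 = u (p.1 + 1) (p.2 + 1) ∧
    u p.1 (p.2 + 1) * h p.1 (p.2 + 1) = u (p.1 + 1) (p.2 + 1)

/-- Every `G`-valued labeling that is flat on the squares in `X` has a potential on these squares: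
a combinatorial form of the simple connectedness of the components of `X`. -/
def HasPotentials (G : Type*) [Group G] (X : Set (ℤ × ℤ)) : Prop :=
  ∀ h v : ℤ → ℤ → G, (∀ p ∈ X, IsFlatAt h v p) →
    ∃ u : ℤ → ℤ → G, ∀ p ∈ X, IsPotentialAt h v u p

/-- Two unit squares share an edge. -/
def SquareAdj (s t : ℤ × ℤ) : Prop :=
  t = (s.1 + 1, s.2) ∨ t = (s.1 - 1, s.2) ∨ t = (s.1, s.2 + 1) ∨ t = (s.1, s.2 - 1)

/-- A move from a unit square to an adjacent one outside `X`. -/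
def StepOff (X : Set (ℤ × ℤ)) (s t : ℤ × ℤ) : Prop := SquareAdj s t ∧ t ∉ X

theorem exists_forall_mul_eq_add_one (h : ℤ → G) (m : ℤ) :
    ∃ a : ℤ → G, a m = 1 ∧ ∀ i, a i * h i = a (i + 1) := by
  let a : ℤ → G
    | .ofNat n => Nat.rec 1 (fun k x ↦ x * h k) n
    | .negSucc n => Nat.rec (h (-1))⁻¹ (fun k x ↦ x * (h (.negSucc (k + 1)))⁻¹) n
  have ha : ∀ i, a i * h i = a (i + 1)
    | .ofNat n => rfl
    | .negSucc 0 => inv_mul_cancel (h (-1))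
    | .negSucc (n + 1) => inv_mul_cancel_right _ _
  exact ⟨fun i ↦ (a m)⁻¹ * a i, inv_mul_cancel _, fun i ↦ by rw [mul_assoc, ha]⟩

theorem hasPotentials_prod_Icc (I : Set ℤ) (m n : ℤ) :
    HasPotentials G (I ×ˢ Set.Icc m n) := by
  intro h v hflat
  choose c hcm hc using fun i ↦ exists_forall_mul_eq_add_one (v i) m
  obtain ⟨a, -, ha⟩ := exists_forall_mul_eq_add_one (fun i ↦ h i m) m
  have hvert (i j) : a i * c i j * v i j = a i * c i (j + 1) := by rw [mul_assoc, hc]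
  have hhor {i} (hi : i ∈ I) (j) (hmj : m ≤ j) :
      j ≤ n + 1 → a i * c i j * h i j = a (i + 1) * c (i + 1) j := by
    induction j, hmj using Int.leInduction with
    | base => simp [hcm, ha]
    | succ j hmj ih =>
      intro hjn
      have hf : h i j * v (i + 1) j = v i j * h i (j + 1) :=
        hflat (i, j) ⟨hi, hmj, by omega⟩
      rw [← hvert, mul_assoc, ← hf, ← mul_assoc, ih (by omega), hvert]
  refine ⟨fun i j ↦ a i * c i j, fun ⟨i, j⟩ ⟨hi, hj⟩ ↦ ?_⟩
  exact ⟨⟨hhor hi j hj.1 (hj.2.trans (by omega)), hvert i j⟩, hvert (i + 1) j,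
    hhor hi (j + 1) (hj.1.trans (by omega)) (add_le_add_left hj.2 1)⟩

-- The edge shared by `s` and `t` is an edge of no other square, so its label can be changed freely.
theorem SquareAdj.exists_isFlatAt (hst : SquareAdj s t) (h v : ℤ → ℤ → G) :
    ∃ h' v' : ℤ → ℤ → G, IsFlatAt h' v' s ∧ ∀ p, p ≠ s → p ≠ t →
      (h' p.1 p.2 = h p.1 p.2 ∧ h' p.1 (p.2 + 1) = h p.1 (p.2 + 1)) ∧
        v' p.1 p.2 = v p.1 p.2 ∧ v' (p.1 + 1) p.2 = v (p.1 + 1) p.2 := by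
  obtain ⟨i, j⟩ := s
  rcases hst with rfl | rfl | rfl | rfl
  · refine ⟨h, fun a b ↦ if a = i + 1 ∧ b = j then (h i j)⁻¹ * (v i j * h i (j + 1)) else v a b,
      by simp [IsFlatAt], ?_⟩
    grind
  · refine ⟨h, fun a b ↦ if a = i ∧ b = j then h i j * v (i + 1) j * (h i (j + 1))⁻¹ else v a b,
      by simp [IsFlatAt], ?_⟩
    grind
  · refine ⟨fun a b ↦ if a = i ∧ b = j + 1 then (v i j)⁻¹ * (h i j * v (i + 1) j) else h a b, v,
      by simp [IsFlatAt], ?_⟩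
    grind
  · refine ⟨fun a b ↦ if a = i ∧ b = j then v i j * h i (j + 1) * (v (i + 1) j)⁻¹ else h a b, v,
      by simp [IsFlatAt], ?_⟩
    grind

theorem HasPotentials.of_insert (hX : HasPotentials G (insert s X)) (hs : s ∉ X) (ht : t ∉ X)
    (hst : SquareAdj s t) : HasPotentials G X := by
  intro h v hflat
  obtain ⟨h', v', hs', heq⟩ := hst.exists_isFlatAt h v
  have heqX (p) (hp : p ∈ X) := heq p (ne_of_mem_of_not_mem hp hs) (ne_of_mem_of_not_mem hp ht)
  obtain ⟨u, hu⟩ := hX h' v' <| Set.forall_mem_insert.2 ⟨hs', fun p hp ↦ by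
    simpa only [IsFlatAt, heqX p hp] using hflat p hp⟩
  exact ⟨u, fun p hp ↦ by
    simpa only [IsPotentialAt, heqX p hp] using hu p (Set.mem_insert_of_mem s hp)⟩

theorem exists_squareAdj_of_reflTransGen {Y : Set (ℤ × ℤ)} (hs : s ∈ Y) (ht : t ∉ Y) (hsX : s ∉ X)
    (hst : Relation.ReflTransGen (StepOff X) s t) : ∃ a ∈ Y, ∃ b ∉ Y, a ∉ X ∧ SquareAdj a b := by
  induction hst using Relation.ReflTransGen.head_induction_on with
  | refl => exact absurd hs ht
  | @head a b hab _ ih =>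
    by_cases hb : b ∈ Y
    · exact ih hb hab.2
    · exact ⟨a, hs, b, hb, hsX, hab.1⟩

theorem HasPotentials.of_escape {B : Finset (ℤ × ℤ)} (hXB : X ⊆ B)
    (hB : HasPotentials G (B : Set (ℤ × ℤ)))
    (hescape : ∀ s ∉ X, ∃ t ∉ B, Relation.ReflTransGen (StepOff X) s t) : HasPotentials G X := by
  induction B using Finset.strongInduction with
  | H B ih =>
    by_cases hBX : (B : Set (ℤ × ℤ)) ⊆ X
    · rwa [← hBX.antisymm hXB]
    obtain ⟨s, hsB, hsX⟩ := Set.not_subset.1 hBX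
    obtain ⟨t, htB, hst⟩ := hescape s hsX
    obtain ⟨a, haB, b, hbB, haX, hab⟩ := exists_squareAdj_of_reflTransGen hsB htB hsX hst
    refine ih (B.erase a) (Finset.erase_ssubset haB) ?_ ?_ fun s hs ↦ ?_
    · rw [Finset.coe_erase]
      exact Set.subset_sdiff_singleton hXB haX
    · refine HasPotentials.of_insert (s := a) (t := b) ?_ (by simp) ?_ hab
      · rwa [← Finset.coe_insert, Finset.insert_erase haB]
      · exact fun hb ↦ hbB (Finset.mem_of_mem_erase hb)
    · obtain ⟨t, ht, hst⟩ := hescape s hs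
      exact ⟨t, fun h ↦ ht (Finset.mem_of_mem_erase h), hst⟩

end GridLabelings

section EscapePaths

open Set Metric Bornology

variable {E : Type*} [NormedAddCommGroup E] [NormedSpace ℝ E] {Y C B : Set E} {p : E}

theorem exists_joinedIn_compl_thickening (hY : IsClosed Y) (hfill : IsFilled Y)
    (hB : IsBounded B) (hp : p ∉ Y) :
    ∃ ρ > 0, ∀ p' ∈ ball p ρ, ∃ q ∉ B, JoinedIn (thickening ρ Y)ᶜ p' q := by
  obtain ⟨q, ⟨γ, hγ⟩, hqB⟩ := not_subset.1 fun hsub ↦ hp (hfill (hB.subset hsub))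
  have hdisj : Disjoint (range γ) Y := disjoint_left.2 (forall_mem_range.2 hγ)
  obtain ⟨ρ, hρ, hthick⟩ := hdisj.exists_thickenings (isCompact_range γ.continuous) hY
  have hsub : thickening ρ (range γ) ⊆ (thickening ρ Y)ᶜ :=
    subset_compl_iff_disjoint_right.2 hthick
  have hball : ball p ρ ⊆ (thickening ρ Y)ᶜ :=
    (ball_subset_thickening (mem_range.2 ⟨0, γ.source⟩) ρ).trans hsub
  refine ⟨ρ, hρ, fun p' hp' ↦ ⟨q, hqB, ?_⟩⟩
  have hp'p : JoinedIn (ball p ρ) p' p :=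
    ((convex_ball p ρ).isPathConnected ⟨p', hp'⟩).joinedIn p' hp' p (mem_ball_self hρ)
  exact (hp'p.mono hball).trans
    ⟨γ, fun t ↦ hsub (self_subset_thickening hρ _ (mem_range_self t))⟩

theorem exists_forall_joinedIn_compl_thickening (hY : IsClosed Y) (hfill : IsFilled Y)
    (hC : IsCompact C) (hCY : Disjoint C Y) (hB : IsBounded B) :
    ∃ ρ > 0, ∀ p ∈ C, ∃ q ∉ B, JoinedIn (thickening ρ Y)ᶜ p q := by
  refine hC.induction_on
    (p := fun s ↦ ∃ ρ > 0, ∀ p ∈ s, ∃ q ∉ B, JoinedIn (thickening ρ Y)ᶜ p q)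
    ⟨1, one_pos, by simp⟩ ?_ ?_ fun p hp ↦ ?_
  · exact fun s t hst ⟨ρ, hρ, h⟩ ↦ ⟨ρ, hρ, fun p hp ↦ h p (hst hp)⟩
  · rintro s t ⟨ρ, hρ, hs⟩ ⟨σ, hσ, ht⟩
    have hmono {p q : E} {τ : ℝ} (hτ : min ρ σ ≤ τ) (h : JoinedIn (thickening τ Y)ᶜ p q) :
        JoinedIn (thickening (min ρ σ) Y)ᶜ p q :=
      h.mono (compl_subset_compl.2 (thickening_mono hτ Y))
    refine ⟨min ρ σ, lt_min hρ hσ, fun p hp ↦ ?_⟩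
    rcases hp with hp | hp
    · exact (hs p hp).imp fun q hq ↦ ⟨hq.1, hmono (min_le_left ρ σ) hq.2⟩
    · exact (ht p hp).imp fun q hq ↦ ⟨hq.1, hmono (min_le_right ρ σ) hq.2⟩
  · obtain ⟨ρ, hρ, h⟩ :=
      exists_joinedIn_compl_thickening hY hfill hB (disjoint_left.1 hCY hp)
    exact ⟨ball p ρ, mem_nhdsWithin_of_mem_nhds (ball_mem_nhds p hρ), ρ, hρ, h⟩

end EscapePaths

section Grid

open Set Metric Relation Filter Topology

variable {Y : Set ℂ} {p q : ℂ} {s t : ℤ × ℤ} {A : Set (ℤ × ℤ)} {d ρ η R : ℝ}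

/-- The closed square with side length `d` and lower left corner `d * s.1 + d * s.2 * I`. -/
def gridSquare (d : ℝ) (s : ℤ × ℤ) : Set ℂ :=
  Icc (d * s.1) (d * (s.1 + 1)) ×ℂ Icc (d * s.2) (d * (s.2 + 1))

/-- The index of the grid square of side length `d` that contains `p` off its upper and right
edges. -/
noncomputable def gridIndex (d : ℝ) (p : ℂ) : ℤ × ℤ := (⌊p.re / d⌋, ⌊p.im / d⌋)

/-- The indices of the grid squares of side length `d` that meet `Y`. -/
def meetingSquares (d : ℝ) (Y : Set ℂ) : Set (ℤ × ℤ) := {s | (gridSquare d s ∩ Y).Nonempty}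

/-- The indices of the grid squares of side length `d` whose lower left corner has real and
imaginary parts of absolute value at most `R`. -/
noncomputable def gridBox (d R : ℝ) : Finset (ℤ × ℤ) :=
  Finset.Icc ⌈-R / d⌉ ⌊R / d⌋ ×ˢ Finset.Icc ⌈-R / d⌉ ⌊R / d⌋

/-- The set `A` of squares together with the squares that cannot be joined to the complement of
`B` off `A`: a combinatorial counterpart of `filledHull`. -/
def filledSquares (A B : Set (ℤ × ℤ)) : Set (ℤ × ℤ) :=
  A ∪ {s | ∀ t, ReflTransGen (StepOff A) s t → t ∈ B}

theorem hasPotentials_filledSquares {G : Type*} [Group G] {B : Finset (ℤ × ℤ)} (hAB : A ⊆ B)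
    (hB : HasPotentials G (B : Set (ℤ × ℤ))) : HasPotentials G (filledSquares A B) := by
  refine HasPotentials.of_escape (union_subset hAB fun s hs ↦ hs s .refl) hB fun s hs ↦ ?_
  have hescape (s) (hs : s ∉ filledSquares A B) : ∃ t ∉ B, ReflTransGen (StepOff A) s t := by
    simpa [filledSquares, and_comm] using (not_or.1 hs).2
  obtain ⟨t, htB, hst⟩ := hescape s hs
  refine ⟨t, htB, ?_⟩
  clear hs
  induction hst using ReflTransGen.head_induction_on with
  | refl => exact .refl
  | head hab hbt ih => exact .head ⟨hab.1, not_or.2 ⟨hab.2, fun h ↦ htB (h t hbt)⟩⟩ ih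

theorem reflTransGen_stepOff_of_dist_le_one (hst : dist s t ≤ 1) (h : ∀ r, dist r t ≤ 1 → r ∉ A) :
    ReflTransGen (StepOff A) s t := by
  have hst' : |s.1 - t.1| ≤ 1 ∧ |s.2 - t.2| ≤ 1 := by
    simp only [Prod.dist_eq, Int.dist_eq, max_le_iff] at hst
    exact_mod_cast hst
  rw [abs_le, abs_le] at hst'
  have hcorner : (t.1, s.2) ∉ A := h _ <| (by simp [Prod.dist_eq] : _ ≤ dist s t).trans hst
  have hhor : ReflTransGen (StepOff A) s (t.1, s.2) := by
    obtain heq | hadj : (t.1, s.2) = s ∨ SquareAdj s (t.1, s.2) := by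
      simp only [SquareAdj, Prod.ext_iff, and_true]
      omega
    · rw [heq]
    · exact .single ⟨hadj, hcorner⟩
  obtain heq | hadj : t = (t.1, s.2) ∨ SquareAdj (t.1, s.2) t := by
    simp only [SquareAdj, Prod.ext_iff, true_and]
    omega
  · rwa [heq]
  · exact hhor.tail ⟨hadj, h t (by simp)⟩

theorem mem_gridBox (hd : 0 < d) : s ∈ gridBox d R ↔ |d * s.1| ≤ R ∧ |d * s.2| ≤ R := by
  have h (k : ℤ) : ⌈-R / d⌉ ≤ k ∧ k ≤ ⌊R / d⌋ ↔ |d * k| ≤ R := by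
    rw [Int.ceil_le, Int.le_floor, div_le_iff₀' hd, le_div_iff₀' hd, abs_le]
  simp only [gridBox, Finset.mem_product, Finset.mem_Icc, h]

theorem mem_gridSquare_gridIndex (hd : 0 < d) (p : ℂ) : p ∈ gridSquare d (gridIndex d p) := by
  have h (x : ℝ) : x ∈ Icc (d * ⌊x / d⌋) (d * (⌊x / d⌋ + 1)) :=
    ⟨(le_div_iff₀' hd).1 (Int.floor_le _), (div_le_iff₀' hd).1 (Int.lt_floor_add_one _).le⟩
  exact ⟨h p.re, h p.im⟩

theorem dist_le_one_of_mem_gridSquare (hp : p ∈ gridSquare d s) (hq : q ∈ gridSquare d t)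
    (hpq : dist p q < d) : dist s t ≤ 1 := by
  have hd : 0 < d := dist_nonneg.trans_lt hpq
  have h {i j : ℤ} {x y : ℝ} (hi : d * i ≤ x) (hj : y ≤ d * (j + 1)) (hxy : x - y < d) :
      (i : ℝ) - j ≤ 1 := by
    have hij : (i : ℝ) < j + 2 := lt_of_mul_lt_mul_left (by linarith : d * i < d * (j + 2)) hd.le
    rw [sub_le_iff_le_add']
    exact_mod_cast show i ≤ j + 1 by linarith [show i < j + 2 by exact_mod_cast hij]
  rw [dist_eq_norm] at hpq
  have hre := abs_lt.1 ((Complex.abs_re_le_norm (p - q)).trans_lt hpq)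
  have him := abs_lt.1 ((Complex.abs_im_le_norm (p - q)).trans_lt hpq)
  simp only [Complex.sub_re, Complex.sub_im] at hre him
  simp only [Prod.dist_eq, Int.dist_eq, max_le_iff, abs_sub_le_iff]
  exact ⟨⟨h hp.1.1 hq.1.2 hre.2, h hq.1.1 hp.1.2 (by linarith)⟩,
    h hp.2.1 hq.2.2 him.2, h hq.2.1 hp.2.2 (by linarith)⟩

theorem dist_le_of_mem_gridSquare (hd : 0 < d) (hst : dist s t ≤ 1) (hp : p ∈ gridSquare d s)
    (hq : q ∈ gridSquare d t) : dist p q ≤ 4 * d := by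
  have h {i j : ℤ} {x y : ℝ} (hij : |(i : ℝ) - j| ≤ 1) (hx : x ∈ Icc (d * i) (d * (i + 1)))
      (hy : y ∈ Icc (d * j) (d * (j + 1))) : |x - y| ≤ 2 * d := by
    have hij' := mul_le_mul_of_nonneg_left hij hd.le
    rw [← abs_of_pos hd, ← abs_mul, abs_of_pos hd, abs_le] at hij'
    exact abs_le.2 ⟨by linarith [hx.1, hy.2], by linarith [hx.2, hy.1]⟩
  simp only [Prod.dist_eq, Int.dist_eq, max_le_iff] at hst
  calc dist p q = ‖p - q‖ := dist_eq_norm p q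
    _ ≤ |p.re - q.re| + |p.im - q.im| := Complex.norm_le_abs_re_add_abs_im (p - q)
    _ ≤ 4 * d := by linarith [h hst.1 hp.1 hq.1, h hst.2 hp.2 hq.2]

theorem mem_gridBox_of_mem_gridSquare (hd : 0 < d) (hp : p ∈ gridSquare d s) (hpR : ‖p‖ + d ≤ R) :
    s ∈ gridBox d R := by
  have hre := abs_le.1 (Complex.abs_re_le_norm p)
  have him := abs_le.1 (Complex.abs_im_le_norm p)
  obtain ⟨⟨h₁, h₂⟩, h₃, h₄⟩ := hp
  rw [mem_gridBox hd, abs_le, abs_le]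
  refine ⟨⟨?_, ?_⟩, ?_, ?_⟩ <;> linarith

theorem norm_le_of_mem_gridSquare (hd : 0 < d) (hs : s ∈ gridBox d R) (hp : p ∈ gridSquare d s) :
    ‖p‖ ≤ 2 * (R + d) := by
  rw [mem_gridBox hd, abs_le, abs_le] at hs
  obtain ⟨⟨h₁, h₂⟩, h₃, h₄⟩ := hp
  have hre : |p.re| ≤ R + d := abs_le.2 ⟨by linarith, by linarith⟩
  have him : |p.im| ≤ R + d := abs_le.2 ⟨by linarith, by linarith⟩
  linarith [Complex.norm_le_abs_re_add_abs_im p]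

theorem hasPotentials_gridBox (G : Type*) [Group G] (d R : ℝ) :
    HasPotentials G (gridBox d R : Set (ℤ × ℤ)) := by
  rw [gridBox, Finset.coe_product, Finset.coe_Icc]
  exact hasPotentials_prod_Icc _ _ _

theorem notMem_meetingSquares (hd : 0 < d) (hdρ : 4 * d < ρ) (hp : p ∈ gridSquare d s)
    (hpY : p ∉ thickening ρ Y) (hst : dist s t ≤ 1) : t ∉ meetingSquares d Y := fun ⟨y, hy, hyY⟩ ↦
  hpY <| mem_thickening_iff.2 ⟨y, hyY, (dist_le_of_mem_gridSquare hd hst hp hy).trans_lt hdρ⟩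

theorem reflTransGen_stepOff_of_dist_lt (hdρ : 4 * d < ρ) (hp : p ∈ gridSquare d s)
    (hq : q ∈ gridSquare d t) (hqY : q ∉ thickening ρ Y) (hpq : dist p q < d) :
    ReflTransGen (StepOff (meetingSquares d Y)) s t :=
  reflTransGen_stepOff_of_dist_le_one (dist_le_one_of_mem_gridSquare hp hq hpq) fun r hr ↦
    notMem_meetingSquares (dist_nonneg.trans_lt hpq) hdρ hq hqY (dist_comm r t ▸ hr)

theorem reflTransGen_stepOff_of_joinedIn (hd : 0 < d) (hdρ : 4 * d < ρ) (hp : p ∈ gridSquare d s)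
    (hpq : JoinedIn (thickening ρ Y)ᶜ p q) :
    ReflTransGen (StepOff (meetingSquares d Y)) s (gridIndex d q) := by
  obtain ⟨γ, hγ⟩ := hpq
  have hstart : ReflTransGen (StepOff (meetingSquares d Y)) s (gridIndex d (γ 0)) :=
    reflTransGen_stepOff_of_dist_lt hdρ hp (mem_gridSquare_gridIndex hd _) (hγ 0) (by simpa)
  rw [← γ.target]
  refine hstart.trans <| isPreconnected_univ.induction₂'
    (fun a b ↦ ReflTransGen (StepOff (meetingSquares d Y)) (gridIndex d (γ a)) (gridIndex d (γ b)))
    (fun a _ ↦ ?_) (fun _ _ _ _ _ _ ↦ .trans) (mem_univ 0) (mem_univ 1)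
  have hnear : ∀ᶠ b in 𝓝 a, dist (γ a) (γ b) < d :=
    (by fun_prop : Continuous fun b ↦ dist (γ a) (γ b)).continuousAt.eventually_lt
      continuousAt_const (by simpa)
  rw [nhdsWithin_univ]
  filter_upwards [hnear] with b hb
  exact ⟨reflTransGen_stepOff_of_dist_lt hdρ (mem_gridSquare_gridIndex hd _)
      (mem_gridSquare_gridIndex hd _) (hγ b) hb,
    reflTransGen_stepOff_of_dist_lt hdρ (mem_gridSquare_gridIndex hd _)
      (mem_gridSquare_gridIndex hd _) (hγ a) (dist_comm (γ a) (γ b) ▸ hb)⟩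

theorem gridSquare_subset_thickening (hd : 0 < d) (hdρ : 4 * d < ρ) (hdη : 4 * d < η)
    (hescape : ∀ p ∈ closedBall 0 (2 * (R + d)) \ thickening η Y, ∃ q ∉ closedBall 0 (2 * (R + d)),
      JoinedIn (thickening ρ Y)ᶜ p q)
    (hs : s ∈ filledSquares (meetingSquares d Y) (gridBox d R)) :
    gridSquare d s ⊆ thickening η Y := by
  intro p hp
  by_contra hpη
  rcases hs with hs | hs
  · exact notMem_meetingSquares hd hdη hp hpη (by simp) hs
  have hpR : p ∈ closedBall 0 (2 * (R + d)) :=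
    mem_closedBall_zero_iff.2 (norm_le_of_mem_gridSquare hd (hs s .refl) hp)
  obtain ⟨q, hqR, hpq⟩ := hescape p ⟨hpR, hpη⟩
  exact hqR <| mem_closedBall_zero_iff.2 <| norm_le_of_mem_gridSquare hd
    (hs _ (reflTransGen_stepOff_of_joinedIn hd hdρ hp hpq)) (mem_gridSquare_gridIndex hd q)

theorem eventually_exists_isPotentialAt (G : Type*) [Group G] (hY : IsCompact Y)
    (hfill : IsFilled Y) (hη : 0 < η) :
    ∀ᶠ d in 𝓝[>] 0, ∀ h v : ℤ → ℤ → G,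
      (∀ s, gridSquare d s ⊆ thickening η Y → IsFlatAt h v s) →
        ∃ u, ∀ s ∈ meetingSquares d Y, IsPotentialAt h v u s := by
  obtain ⟨R, hYR⟩ := hY.isBounded.exists_norm_le
  have hCY : Disjoint (closedBall 0 (2 * (R + 2)) \ thickening η Y) Y :=
    disjoint_left.2 fun z hz hzY ↦ hz.2 (self_subset_thickening hη _ hzY)
  obtain ⟨ρ, hρ, hescape⟩ := exists_forall_joinedIn_compl_thickening hY.isClosed hfill
    ((isCompact_closedBall _ _).diff isOpen_thickening) hCY
    (isBounded_closedBall (x := 0) (r := 2 * (R + 2)))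
  have hsmall {r : ℝ} (hr : 0 < r) : ∀ᶠ d in 𝓝[>] 0, d < r :=
    mem_nhdsWithin_of_mem_nhds (gt_mem_nhds hr)
  filter_upwards [self_mem_nhdsWithin, hsmall one_pos, hsmall (div_pos hρ four_pos),
    hsmall (div_pos hη four_pos)] with d (hd : 0 < d) hd₁ hdρ hdη h v hflat
  have hbox : meetingSquares d Y ⊆ gridBox d (R + 2 - d) := fun s ⟨y, hys, hyY⟩ ↦
    mem_gridBox_of_mem_gridSquare hd hys (by linarith [hYR y hyY])
  obtain ⟨u, hu⟩ := hasPotentials_filledSquares hbox (hasPotentials_gridBox G d _) h v fun s hs ↦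
    hflat s <| gridSquare_subset_thickening (ρ := ρ) hd (by linarith) (by linarith)
      (by simpa using hescape) hs
  exact ⟨u, fun s hs ↦ hu s (Or.inl hs)⟩

end Grid

section LocalCocycle

open Set Metric Filter Topology

variable {X G : Type*} [PseudoMetricSpace X] [Group G] {g : X → X → G} {u : ℤ → ℤ → G}
  {P : ℤ × ℤ → X} {s t : ℤ × ℤ} {x : X} {d δ η : ℝ}

/-- A Čech 1-cocycle of a metric space at scale `δ`: the cocycle identity holds for all triples of
points whose mutual distances are less than `δ`. -/
def IsCocycleAtScale (δ : ℝ) (g : X → X → G) : Prop :=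
  ∀ a b c, dist a b < δ → dist b c < δ → dist a c < δ → g a b * g b c = g a c

theorem mem_corners_iff : t ∈ Icc s (s + 1) ↔
    (t.1 = s.1 ∨ t.1 = s.1 + 1) ∧ (t.2 = s.2 ∨ t.2 = s.2 + 1) := by
  simp only [mem_Icc, Prod.le_def, Prod.fst_add, Prod.snd_add, Prod.fst_one, Prod.snd_one]
  omega

theorem IsCocycleAtScale.isFlatAt (hg : IsCocycleAtScale δ g)
    (hP : ∀ t ∈ Icc s (s + 1), ∀ t' ∈ Icc s (s + 1), dist (P t) (P t') < δ) :
    IsFlatAt (fun i j ↦ g (P (i, j)) (P (i + 1, j))) (fun i j ↦ g (P (i, j)) (P (i, j + 1))) s := by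
  have hcocycle {t t'} (ht : t ∈ Icc s (s + 1)) (ht' : t' ∈ Icc s (s + 1)) :=
    hg (P s) (P t) (P t') (hP _ (by simp) _ ht) (hP _ ht _ ht') (hP _ (by simp) _ ht')
  unfold IsFlatAt
  rw [hcocycle, hcocycle] <;> exact mem_corners_iff.2 (by simp)

theorem IsCocycleAtScale.mul_eq_of_isPotentialAt (hg : IsCocycleAtScale δ g)
    (hu : IsPotentialAt (fun i j ↦ g (P (i, j)) (P (i + 1, j)))
      (fun i j ↦ g (P (i, j)) (P (i, j + 1))) u s)
    (hP : ∀ t ∈ Icc s (s + 1), ∀ t' ∈ Icc s (s + 1), dist (P t) (P t') < δ)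
    (hx : ∀ t ∈ Icc s (s + 1), dist (P t) x < δ) (ht : t ∈ Icc s (s + 1)) :
    u t.1 t.2 * g (P t) x = u s.1 s.2 * g (P s) x := by
  have hedge {t t'} (ht : t ∈ Icc s (s + 1)) (ht' : t' ∈ Icc s (s + 1))
      (h : u t.1 t.2 * g (P t) (P t') = u t'.1 t'.2) :
      u t'.1 t'.2 * g (P t') x = u t.1 t.2 * g (P t) x := by
    rw [← h, mul_assoc, hg _ _ _ (hP t ht t' ht') (hx t' ht') (hx t ht)]
  obtain ⟨⟨hright, htop⟩, hright_top, -⟩ := hu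
  have hright := hedge (t := s) (t' := (s.1 + 1, s.2)) (by simp)
    (mem_corners_iff.2 (by simp)) hright
  have htop := hedge (t := s) (t' := (s.1, s.2 + 1)) (by simp)
    (mem_corners_iff.2 (by simp)) htop
  have hdiag := hedge (t := (s.1 + 1, s.2)) (t' := (s.1 + 1, s.2 + 1))
    (mem_corners_iff.2 (by simp)) (mem_corners_iff.2 (by simp)) hright_top
  obtain ⟨i, j⟩ := t
  rw [mem_corners_iff] at ht
  obtain ⟨rfl | rfl, rfl | rfl⟩ := ht
  exacts [rfl, htop, hright, hdiag.trans hright]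

/-- The lower left corner of `gridSquare d s`. -/
def gridVertex (d : ℝ) (s : ℤ × ℤ) : ℂ := ⟨d * s.1, d * s.2⟩

theorem gridVertex_mem_gridSquare (hd : 0 < d) (ht : t ∈ Icc s (s + 1)) :
    gridVertex d t ∈ gridSquare d s := by
  obtain ⟨h₁ | h₁, h₂ | h₂⟩ := mem_corners_iff.1 ht <;>
    simp [gridVertex, gridSquare, Complex.mem_reProdIm, h₁, h₂, mul_le_mul_iff_right₀ hd]

theorem exists_gridVertex_approx {Y : Set ℂ} (hY : Y.Nonempty) (hd : 0 < d) (hdη : 4 * d < η) :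
    ∃ P : ℤ × ℤ → Y,
      (∀ s, gridSquare d s ⊆ thickening η Y → ∀ t ∈ Icc s (s + 1), ∀ t' ∈ Icc s (s + 1),
        dist (P t) (P t') < 3 * η) ∧
      ∀ (x : Y) s, (x : ℂ) ∈ gridSquare d s → gridSquare d s ⊆ thickening η Y ∧
        ∀ t ∈ Icc s (s + 1), dist (P t) x < 2 * η := by
  obtain ⟨y₀, hy₀⟩ := hY
  have hP (t : ℤ × ℤ) :
      ∃ y : Y, gridVertex d t ∈ thickening η Y → dist (gridVertex d t) y < η := by
    by_cases h : gridVertex d t ∈ thickening η Y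
    · obtain ⟨y, hy, hty⟩ := mem_thickening_iff.1 h
      exact ⟨⟨y, hy⟩, fun _ ↦ hty⟩
    · exact ⟨⟨y₀, hy₀⟩, fun h' ↦ absurd h' h⟩
  choose P hP using hP
  have hdiam {s : ℤ × ℤ} {p q : ℂ} (hp : p ∈ gridSquare d s) (hq : q ∈ gridSquare d s) :
      dist p q ≤ 4 * d := dist_le_of_mem_gridSquare hd (by simp) hp hq
  have hthick {x : Y} {s} (hx : (x : ℂ) ∈ gridSquare d s) : gridSquare d s ⊆ thickening η Y :=
    fun p hp ↦ mem_thickening_iff.2 ⟨x, x.2, (hdiam hp hx).trans_lt hdη⟩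
  refine ⟨P, fun s hs t ht t' ht' ↦ ?_, fun x s hx ↦ ⟨hthick hx, fun t ht ↦ ?_⟩⟩
  · have hts := gridVertex_mem_gridSquare hd ht
    have hts' := gridVertex_mem_gridSquare hd ht'
    have := dist_triangle4_left (gridVertex d t) (gridVertex d t') (P t : ℂ) (P t')
    rw [Subtype.dist_eq]
    linarith [hP t (hs hts), hP t' (hs hts'), hdiam hts hts']
  · have hts := gridVertex_mem_gridSquare hd ht
    rw [Subtype.dist_eq]
    linarith [hP t (hthick hx hts), hdiam hts hx,
      dist_triangle_left (P t : ℂ) x (gridVertex d t)]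

theorem sup_mem_corners (hst : dist s t ≤ 1) : s ⊔ t ∈ Icc s (s + 1) ∩ Icc t (t + 1) := by
  have hst' : |s.1 - t.1| ≤ 1 ∧ |s.2 - t.2| ≤ 1 := by
    simp only [Prod.dist_eq, Int.dist_eq, max_le_iff] at hst
    exact_mod_cast hst
  rw [abs_le, abs_le] at hst'
  simp only [mem_inter_iff, mem_corners_iff, Prod.fst_sup, Prod.snd_sup]
  omega

theorem IsCocycleAtScale.exists_mul_eq {Y : Set ℂ} (hY : IsCompact Y) (hfill : IsFilled Y)
    {g : Y → Y → G} (hδ : 0 < δ) (hg : IsCocycleAtScale δ g) :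
    ∃ W : Y → G, ∃ r > 0, ∀ x y, dist x y < r → W x * g x y = W y := by
  obtain rfl | hne := Y.eq_empty_or_nonempty
  · exact ⟨fun _ ↦ 1, 1, one_pos, fun x ↦ x.2.elim⟩
  have hη : 0 < δ / 4 := by positivity
  obtain ⟨d, hd, hdη, hpot⟩ : ∃ d, 0 < d ∧ 4 * d < δ / 4 ∧ _ := by
    have hsmall : ∀ᶠ d in 𝓝[>] 0, d < δ / 4 / 4 :=
      mem_nhdsWithin_of_mem_nhds (gt_mem_nhds (by positivity))
    obtain ⟨d, hd, hdη, hpot⟩ := (eventually_mem_nhdsWithin.and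
      (hsmall.and (eventually_exists_isPotentialAt G hY hfill hη))).exists
    exact ⟨d, hd, by linarith, hpot⟩
  obtain ⟨P, hPP, hPx⟩ := exists_gridVertex_approx hne hd hdη
  obtain ⟨u, hu⟩ := hpot _ _ fun s hs ↦ hg.isFlatAt (P := P) fun t ht t' ht' ↦
    (hPP s hs t ht t' ht').trans (by linarith)
  let W (x : Y) : G := u (gridIndex d x).1 (gridIndex d x).2 * g (P (gridIndex d x)) x
  have hW (x : Y) {t} (ht : t ∈ Icc (gridIndex d x) (gridIndex d x + 1)) :
      W x = u t.1 t.2 * g (P t) x ∧ dist (P t) x < δ / 2 := by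
    have hx := mem_gridSquare_gridIndex hd (x : ℂ)
    obtain ⟨hs, hPs⟩ := hPx x _ hx
    refine ⟨(hg.mul_eq_of_isPotentialAt (hu _ ⟨x, hx, x.2⟩) ?_ ?_ ht).symm,
      (hPs t ht).trans_eq (by ring)⟩
    · exact fun t ht t' ht' ↦ (hPP _ hs t ht t' ht').trans (by linarith)
    · exact fun t ht ↦ (hPs t ht).trans (by linarith)
  refine ⟨W, d, hd, fun x y hxy ↦ ?_⟩
  have hidx := dist_le_one_of_mem_gridSquare (mem_gridSquare_gridIndex hd (x : ℂ))
    (mem_gridSquare_gridIndex hd (y : ℂ)) hxy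
  obtain ⟨hWx, hPx⟩ := hW x (sup_mem_corners hidx).1
  obtain ⟨hWy, hPy⟩ := hW y (sup_mem_corners hidx).2
  rw [hWx, hWy, mul_assoc, hg _ _ _ (by linarith) (by linarith) (by linarith)]

end LocalCocycle

section Holonomy

open Set Metric unitInterval Filter Topology

variable {X G : Type*} [Group G]

theorem exists_forall_range_subset_closedBall [PseudoMetricSpace X] {Y : Set X}
    (hY : IsPathConnected Y) (hloc : IsUniformlyLocPathConnected Y) {ε : ℝ} (hε : 0 < ε) :
    ∃ δ > 0, ∃ S : ∀ a b : Y, Path a b,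
      ∀ a b, dist a b < δ → range (S a b) ⊆ closedBall a ε := by
  obtain ⟨δ, hδ, h⟩ := hloc ε hε
  refine ⟨δ, hδ, ?_⟩
  have hS (a b : Y) : ∃ p : Path a b, dist a b < δ → range p ⊆ closedBall a ε := by
    by_cases hab : dist a b < δ
    · let p := (h a a.2 b b.2 hab).joined_subtype.somePath
      exact ⟨p.map (continuous_inclusion inter_subset_left),
        fun _ ↦ range_subset_iff.2 fun t ↦ (p t).2.2⟩
    · exact ⟨(hY.joinedIn a a.2 b b.2).joined_subtype.somePath, fun h ↦ absurd h hab⟩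
  choose S hS using hS
  exact ⟨S, hS⟩

/-- A multiplicative and homotopy invariant assignment of group elements to the paths of `X`, like
the holonomy of a flat connection. -/
structure PathHolonomy (X G : Type*) [TopologicalSpace X] [Group G] where
  /-- The holonomy along a path. -/
  toFun : ∀ {a b : X}, Path a b → G
  map_trans : ∀ {a b c : X} (p : Path a b) (q : Path b c), toFun (p.trans q) = toFun p * toFun q
  map_homotopic : ∀ {a b : X} {p q : Path a b}, p.Homotopic q → toFun p = toFun q

namespace PathHolonomy

instance [TopologicalSpace X] : CoeFun (PathHolonomy X G) fun _ ↦ ∀ {a b : X}, Path a b → G :=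
  ⟨toFun⟩

theorem map_symm [TopologicalSpace X] (H : PathHolonomy X G) {a b : X} (p : Path a b) :
    H p.symm = (H p)⁻¹ := by
  have hrefl : H (Path.refl b) = 1 := by
    rw [← mul_eq_left (a := H (Path.refl b)), ← H.map_trans]
    exact H.map_homotopic ⟨.transRefl _⟩
  rw [eq_inv_iff_mul_eq_one, ← H.map_trans, ← hrefl]
  exact H.map_homotopic ⟨(Path.Homotopy.reflSymmTrans p).symm⟩

section Scale

variable [PseudoMetricSpace X] {a b c : X} {W : X → G} {d ε : ℝ}

theorem mul_eq_of_forall_range_subset_ball (H : PathHolonomy X G) (hd : 0 < d)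
    (hW : ∀ a b (p : Path a b), range p ⊆ ball a d → W a * H p = W b) (p : Path a b) :
    W a * H p = W b := by
  have hcast (x y : X) (hx : x = a) (hy : y = b) (h : W x * H (p.cast hx hy) = W y) :
      W a * H p = W b := by
    subst hx hy
    exact h
  refine hcast _ _ p.source p.target ?_
  rw [← Path.subpath_zero_one]
  refine isPreconnected_univ.induction₂ (fun s t ↦ W (p s) * H (p.subpath s t) = W (p t))
    (fun s _ ↦ ?_) (fun r s t _ _ _ hrs hst ↦ ?_) (fun s t _ _ hst ↦ ?_) (mem_univ 0) (mem_univ 1)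
  · have hball : ∀ᶠ t in 𝓝 s, uIcc s t ⊆ p ⁻¹' ball (p s) d :=
      tendsto_smallSets_iff.1 (tendsto_const_nhds.uIcc tendsto_id) _
        (p.continuous.continuousAt (ball_mem_nhds _ hd))
    rw [nhdsWithin_univ]
    filter_upwards [hball] with t ht
    exact hW _ _ _ (Path.range_subpath p s t ▸ image_subset_iff.2 ht)
  · rw [← hst, ← hrs, mul_assoc, ← H.map_trans,
      H.map_homotopic ⟨Path.Homotopy.subpathTransSubpath p r s t⟩]
  · rw [← hst, ← Path.symm_subpath, H.map_symm, inv_mul_cancel_right]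

/-- The loops of radius at most `ε` have trivial holonomy. -/
def IsTrivialAtScale (H : PathHolonomy X G) (ε : ℝ) : Prop :=
  ∀ (a : X) (p : Path a a), range p ⊆ closedBall a ε → H p = 1

theorem IsTrivialAtScale.eq_of_range_subset {H : PathHolonomy X G} (hH : H.IsTrivialAtScale ε)
    {p q : Path a b} (hp : range p ⊆ closedBall c (ε / 2)) (hq : range q ⊆ closedBall c (ε / 2)) :
    H p = H q := by
  rw [← mul_inv_eq_one, ← H.map_symm, ← H.map_trans]
  refine hH a _ ?_
  rw [Path.trans_range, Path.symm_range]
  have ha : dist c a ≤ ε / 2 := mem_closedBall'.1 (hp p.source_mem_range)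
  exact (union_subset hp hq).trans (closedBall_subset_closedBall' (by linarith))

theorem IsTrivialAtScale.isCocycleAtScale {H : PathHolonomy X G} (hH : H.IsTrivialAtScale ε)
    {S : ∀ a b : X, Path a b} (hd : d ≤ ε / 4)
    (hS : ∀ a b, dist a b < d → range (S a b) ⊆ closedBall a (ε / 4)) :
    IsCocycleAtScale d fun a b ↦ H (S a b) := by
  intro a b c hab hbc hac
  have hε : 0 ≤ ε / 4 := dist_nonneg.trans (hab.le.trans hd)
  dsimp only
  rw [← H.map_trans]
  refine hH.eq_of_range_subset (c := a) ?_
    ((hS a c hac).trans (closedBall_subset_closedBall (by linarith)))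
  rw [Path.trans_range]
  refine union_subset ((hS a b hab).trans (closedBall_subset_closedBall (by linarith)))
    ((hS b c hbc).trans (closedBall_subset_closedBall' ?_))
  rw [dist_comm]
  linarith

end Scale

theorem IsTrivialAtScale.eq_one {Y : Set ℂ} (hY : IsCompact Y) (hfill : IsFilled Y)
    (hconn : IsPathConnected Y) (hloc : IsUniformlyLocPathConnected Y) {H : PathHolonomy Y G}
    {ε : ℝ} (hε : 0 < ε) (hH : H.IsTrivialAtScale ε) {a : Y} (p : Path a a) : H p = 1 := by
  have hε' : 0 < ε / 4 := by positivity
  obtain ⟨δ', hδ', S, hS⟩ := exists_forall_range_subset_closedBall hconn hloc hε'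
  set δ := min δ' (ε / 4)
  have hδ : 0 < δ := lt_min hδ' hε'
  obtain ⟨W, r, hr, hW⟩ := (hH.isCocycleAtScale (d := δ) (min_le_right _ _) fun a b hab ↦
    hS a b (hab.trans_le (min_le_left _ _))).exists_mul_eq hY hfill hδ
  refine mul_eq_left.1 (H.mul_eq_of_forall_range_subset_ball (W := W)
    (lt_min hr hδ) (fun x y q hq ↦ ?_) p)
  have hxy := lt_min_iff.1 (mem_ball'.1 (hq q.target_mem_range))
  rw [← hW x y hxy.1]
  congr 1
  refine hH.eq_of_range_subset (c := x) (hq.trans (ball_subset_closedBall.trans ?_))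
    ((hS x y (hxy.2.trans_le (min_le_left _ _))).trans ?_) <;> apply closedBall_subset_closedBall
  · linarith [min_le_right r δ, min_le_right δ' (ε / 4)]
  · linarith

end PathHolonomy

end Holonomy

section FundamentalGroup

open Set Metric
open Path.Homotopic.Quotient (trans_assoc symm_trans trans_symm refl_trans trans_refl mk_trans
  mk_symm mk_refl)

theorem eq_top_of_forall_small_loop_mem {Y : Set ℂ} (hY : IsCompact Y) (hfill : IsFilled Y)
    (hconn : IsPathConnected Y) (hloc : IsUniformlyLocPathConnected Y) {ε : ℝ} (hε : 0 < ε) {a : Y}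
    (N : Subgroup (FundamentalGroup Y a)) [N.Normal]
    (hN : ∀ (b : Y) (c : Path a b) (l : Path b b), range l ⊆ closedBall b ε →
      FundamentalGroup.fromPath (.mk ((c.trans l).trans c.symm)) ∈ N) : N = ⊤ := by
  have : PathConnectedSpace Y := isPathConnected_iff_pathConnectedSpace.1 hconn
  let c (b : Y) : Path a b := PathConnectedSpace.somePath a b
  let H : PathHolonomy Y (FundamentalGroup Y a ⧸ N)ᵐᵒᵖ := {
    toFun {x y} p := .op (QuotientGroup.mk (.fromPath (.mk (((c x).trans p).trans (c y).symm))))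
    map_trans {x y z} p q := by
      rw [← MulOpposite.op_mul, ← QuotientGroup.mk_mul, FundamentalGroup.mul_def]
      congr 2
      simp only [FundamentalGroup.fromPath, mk_trans, mk_symm, trans_assoc]
      rw [← trans_assoc (Path.Homotopic.Quotient.mk (c y)).symm, symm_trans, refl_trans]
    map_homotopic h := by
      simp only [mk_trans, Path.Homotopic.Quotient.eq.2 h] }
  have hH : H.IsTrivialAtScale ε := fun b l hl ↦ by
    rw [← MulOpposite.op_one, ← QuotientGroup.mk_one]
    exact congrArg _ ((QuotientGroup.eq_one_iff _).2 (hN b (c b) l hl))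
  refine eq_top_iff.2 fun g _ ↦ ?_
  induction g using Quotient.inductionOn with
  | h p =>
    have hp := (QuotientGroup.eq_one_iff _).1 (MulOpposite.op_injective
      (hH.eq_one hY hfill hconn hloc hε p))
    let γ : FundamentalGroup Y a := .fromPath (.mk (c a))
    have hconj : γ⁻¹ * (.fromPath (.mk p) * γ) ∈ N := hp
    have hmem := Subgroup.Normal.conj_mem ‹_› _ hconj γ
    rwa [mul_inv_cancel_left, mul_inv_cancel_right] at hmem

end FundamentalGroup

section Patched

open Set Metric unitInterval Filter Topology

theorem exists_seq_tendsto_of_forall_exists_dist_le {K X : Type*} [TopologicalSpace K]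
    [CompactSpace K] [MetricSpace X] [CompleteSpace X] {P : ℕ → C(K, X) → Prop} {C : ℝ}
    (hC : 0 ≤ C) (h₀ : ∃ f, P 0 f)
    (hstep : ∀ k f, P k f → ∃ f', P (k + 1) f' ∧ ∀ z, dist (f z) (f' z) ≤ C * (1 / 2) ^ k) :
    ∃ (f : ℕ → C(K, X)) (g : C(K, X)), (∀ k, P k (f k)) ∧
      ∀ z, Tendsto (fun k ↦ f k z) atTop (𝓝 (g z)) := by
  choose! next hnext hdist using hstep
  obtain ⟨f₀, h₀⟩ := h₀
  let f (k : ℕ) : C(K, X) := k.rec f₀ next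
  have hf (k : ℕ) : P k (f k) := by
    induction k with
    | zero => exact h₀
    | succ k ih => exact hnext k _ ih
  obtain ⟨g, hg⟩ := cauchySeq_tendsto_of_complete <| cauchySeq_of_le_geometric (1 / 2) C
    (by norm_num) fun k ↦ (ContinuousMap.dist_le (by positivity)).2 (hdist k (f k) (hf k))
  exact ⟨f, g, hf, fun z ↦ ((continuous_eval_const z).tendsto g).comp hg⟩

variable {X : Type*} [PseudoMetricSpace X] {Y Z : Set X} {ε : ℝ} {x y w : X}

/-- The homotopies of paths composed of homotopies in `Y` and of disks of radius at most `ε`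
bounded by loops in `Y`. -/
inductive IsPatched (Y : Set X) (ε : ℝ) : ∀ {x y : X} {p q : Path x y}, p.Homotopy q → Prop
  | of_forall_mem {x y : X} {p q : Path x y} (F : p.Homotopy q) (h : ∀ z, F z ∈ Y) : IsPatched Y ε F
  | of_forall_mem_closedBall {x : X} {p : Path x x} (F : p.Homotopy (.refl x)) (hp : range p ⊆ Y)
      (h : ∀ z, F z ∈ closedBall x ε) : IsPatched Y ε F
  | trans {x y : X} {p q r : Path x y} {F : p.Homotopy q} {G : q.Homotopy r}
      (hF : IsPatched Y ε F) (hG : IsPatched Y ε G) : IsPatched Y ε (F.trans G)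
  | hcomp {x y z : X} {p q : Path x y} {p' q' : Path y z} {F : p.Homotopy q} {G : p'.Homotopy q'}
      (hF : IsPatched Y ε F) (hG : IsPatched Y ε G) : IsPatched Y ε (F.hcomp G)
  | symm {x y : X} {p q : Path x y} {F : p.Homotopy q} (hF : IsPatched Y ε F) :
      IsPatched Y ε F.symm

theorem forall_rel_homotopy_trans {r : X → X → Prop} {p q s p' q' s' : Path x y}
    {F : p.Homotopy q} {G : q.Homotopy s} {F' : p'.Homotopy q'} {G' : q'.Homotopy s'}
    (hF : ∀ z, r (F z) (F' z)) (hG : ∀ z, r (G z) (G' z)) (z) :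
    r (F.trans G z) (F'.trans G' z) := by
  simp only [Path.Homotopy.trans_apply]
  split_ifs
  exacts [hF _, hG _]

theorem forall_rel_homotopy_hcomp {r : X → X → Prop} {p q p' q' : Path x y} {s t s' t' : Path y w}
    {F : p.Homotopy q} {G : s.Homotopy t} {F' : p'.Homotopy q'} {G' : s'.Homotopy t'}
    (hF : ∀ z, r (F z) (F' z)) (hG : ∀ z, r (G z) (G' z)) (z) :
    r (F.hcomp G z) (F'.hcomp G' z) := by
  simp only [Path.Homotopy.hcomp_apply]
  split_ifs
  exacts [hF (_, _), hG (_, _)]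

theorem IsPatched.mono (hYZ : Y ⊆ Z) {p q : Path x y} {F : p.Homotopy q} (hF : IsPatched Y ε F) :
    IsPatched Z ε F := by
  induction hF with
  | of_forall_mem F h => exact .of_forall_mem F fun z ↦ hYZ (h z)
  | of_forall_mem_closedBall F hp h => exact .of_forall_mem_closedBall F (hp.trans hYZ) h
  | trans _ _ hF hG => exact hF.trans hG
  | hcomp _ _ hF hG => exact hF.hcomp hG
  | symm _ hF => exact hF.symm

theorem IsPatched.exists_dist_le (hε : 0 ≤ ε) {p q : Path x y} {F : p.Homotopy q}
    (hF : IsPatched Y ε F) (z) : ∃ w ∈ Y, dist (F z) w ≤ ε := by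
  let r (u _ : X) : Prop := ∃ w ∈ Y, dist u w ≤ ε
  suffices h : ∀ z, r (F z) (F z) from h z
  clear z
  induction hF with
  | of_forall_mem F h => exact fun z ↦ ⟨F z, h z, by simpa⟩
  | @of_forall_mem_closedBall x p F hp h => exact fun z ↦ ⟨x, hp p.source_mem_range, h z⟩
  | trans _ _ hF hG => exact forall_rel_homotopy_trans hF hG
  | hcomp _ _ hF hG => exact forall_rel_homotopy_hcomp hF hG
  | symm _ hF => exact fun z ↦ hF (σ z.1, z.2)

/-- The relation on paths in `Y` of being joined, in the ambient space, by a homotopy composed of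
homotopies in `Y` and of disks of radius at most `ε` bounded by loops in `Y`. -/
def IsPatchHomotopic (Y : Set X) (ε : ℝ) {a b : Y} (p q : Path a b) : Prop :=
  ∃ F : (p.map continuous_subtype_val).Homotopy (q.map continuous_subtype_val), IsPatched Y ε F

namespace IsPatchHomotopic

variable {a b c : Y}

theorem of_homotopic {p q : Path a b} (h : p.Homotopic q) : IsPatchHomotopic Y ε p q := by
  obtain ⟨F⟩ := h
  exact ⟨F.map ⟨Subtype.val, continuous_subtype_val⟩, .of_forall_mem _ fun z ↦ (F z).2⟩

theorem refl (p : Path a b) : IsPatchHomotopic Y ε p p :=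
  of_homotopic (.refl p)

theorem symm {p q : Path a b} : IsPatchHomotopic Y ε p q → IsPatchHomotopic Y ε q p :=
  fun ⟨F, hF⟩ ↦ ⟨F.symm, hF.symm⟩

theorem trans {p q r : Path a b} : IsPatchHomotopic Y ε p q → IsPatchHomotopic Y ε q r →
    IsPatchHomotopic Y ε p r :=
  fun ⟨F, hF⟩ ⟨G, hG⟩ ↦ ⟨F.trans G, hF.trans hG⟩

theorem hcomp {p q : Path a b} {p' q' : Path b c} (h : IsPatchHomotopic Y ε p q)
    (h' : IsPatchHomotopic Y ε p' q') : IsPatchHomotopic Y ε (p.trans p') (q.trans q') := by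
  obtain ⟨F, hF⟩ := h
  obtain ⟨G, hG⟩ := h'
  rw [IsPatchHomotopic, Path.map_trans, Path.map_trans]
  exact ⟨F.hcomp G, hF.hcomp hG⟩

theorem conj {l : Path b b} (h : IsPatchHomotopic Y ε l (.refl b)) (p : Path a b) :
    IsPatchHomotopic Y ε ((p.trans l).trans p.symm) (.refl a) :=
  (((refl p).hcomp h).hcomp (refl p.symm)).trans <| of_homotopic <|
    Path.Homotopic.Quotient.eq.1 (by simp)

theorem of_range_subset_closedBall {E : Type*} [NormedAddCommGroup E] [NormedSpace ℝ E]
    {Y : Set E} {a : Y} {p : Path a a} (hp : range p ⊆ closedBall a ε) :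
    IsPatchHomotopic Y ε p (.refl a) := by
  let F : (p.map continuous_subtype_val).Homotopy ((Path.refl a).map continuous_subtype_val) :=
    { ContinuousMap.Homotopy.affine _ _ with
      prop' := by rintro t x (rfl | rfl) <;> simp }
  have hF (z : I × I) : F z ∈ closedBall (a : E) ε :=
    (convex_closedBall _ _).segment_subset (hp (mem_range_self z.2))
      (mem_closedBall_self (dist_nonneg.trans (hp (mem_range_self z.2))))
      ((Path.range_segment _ _).subset (mem_range_self z.1))
  exact ⟨F, .of_forall_mem_closedBall F (range_subset_iff.2 fun t ↦ (p t).2) hF⟩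

end IsPatchHomotopic

/-- The normal subgroup of classes of loops that are patch homotopic to the constant loop. -/
def patchSubgroup (Y : Set X) (ε : ℝ) (a : Y) : Subgroup (FundamentalGroup Y a) where
  carrier := {g | ∃ p : Path a a, .fromPath (.mk p) = g ∧ IsPatchHomotopic Y ε p (.refl a)}
  mul_mem' := by
    rintro _ _ ⟨p, rfl, hp⟩ ⟨q, rfl, hq⟩
    exact ⟨q.trans p, rfl, (hq.hcomp hp).trans (.of_homotopic ⟨.transRefl _⟩)⟩
  one_mem' := ⟨.refl a, rfl, .refl _⟩
  inv_mem' := by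
    rintro _ ⟨p, rfl, hp⟩
    exact ⟨p.symm, rfl, .trans (.of_homotopic ⟨(Path.Homotopy.transRefl _).symm⟩) <|
      .trans ((IsPatchHomotopic.refl _).hcomp hp.symm)
        (.of_homotopic ⟨(Path.Homotopy.reflSymmTrans p).symm⟩)⟩

theorem fromPath_mk_mem_patchSubgroup {a : Y} {p : Path a a} :
    FundamentalGroup.fromPath (.mk p) ∈ patchSubgroup Y ε a ↔
      IsPatchHomotopic Y ε p (.refl a) :=
  ⟨fun ⟨_, hq, h⟩ ↦ .trans (.of_homotopic (Path.Homotopic.Quotient.eq.1 hq.symm)) h,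
    fun h ↦ ⟨p, rfl, h⟩⟩

instance (a : Y) : (patchSubgroup Y ε a).Normal where
  conj_mem := by
    rintro _ ⟨p, rfl, hp⟩ g
    obtain ⟨q, rfl⟩ : ∃ q, FundamentalGroup.fromPath (.mk q) = g := Quotient.exists_rep _
    have hconj := fromPath_mk_mem_patchSubgroup.2 (hp.conj q.symm)
    rw [Path.symm_symm] at hconj
    rwa [mul_assoc]

theorem exists_isPatched_filledHull_range {x : ℂ} (f : Path x x) (hε : 0 < ε) :
    ∃ F : f.Homotopy (.refl x), IsPatched (filledHull (range f)) ε F := by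
  set Y := filledHull (range f)
  have hf (t : I) : f t ∈ Y := subset_filledHull _ (mem_range_self t)
  have hrange : IsCompact (range f) := isCompact_range f.continuous
  let a : Y := ⟨x, by simpa using hf 0⟩
  let p : Path a a := {
    toFun t := ⟨f t, hf t⟩
    source' := by simp [a]
    target' := by simp [a] }
  have htop : patchSubgroup Y ε a = ⊤ :=
    eq_top_of_forall_small_loop_mem (isCompact_filledHull hrange) (isFilled_filledHull _)
      (isPathConnected_filledHull hrange.isClosed (isPathConnected_range f.continuous))
      (isUniformlyLocPathConnected_filledHull hrange.isClosed
        (isUniformlyLocPathConnected_range f.continuous)) hε _ fun b c l hl ↦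
      fromPath_mk_mem_patchSubgroup.2 (.conj (.of_range_subset_closedBall hl) c)
  exact fromPath_mk_mem_patchSubgroup.1 <|
    htop ▸ Subgroup.mem_top (FundamentalGroup.fromPath (.mk p))

theorem exists_isPatched_dist_le {x : ℂ} {p : Path x x} {F : p.Homotopy (.refl x)} {ε' : ℝ}
    (hε' : 0 < ε') (hε : ε' ≤ ε) (hF : ∀ z, F z ∈ closedBall x ε) :
    ∃ F' : p.Homotopy (.refl x), IsPatched (filledHull (range p)) ε' F' ∧
      ∀ z, dist (F z) (F' z) ≤ 3 * ε := by
  obtain ⟨F', hF'⟩ := exists_isPatched_filledHull_range p hε'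
  refine ⟨F', hF', fun z ↦ ?_⟩
  have hp : range p ⊆ closedBall x ε :=
    range_subset_iff.2 fun t ↦ by simpa using hF (0, t)
  obtain ⟨w, hw, hFw⟩ := hF'.exists_dist_le hε'.le z
  have hball : IsFilled (closedBall x ε) :=
    isFilled_of_convex (convex_closedBall x ε) (nonempty_closedBall.2 (hε'.le.trans hε))
  have hwx : dist w x ≤ ε := filledHull_subset hp hball hw
  calc dist (F z) (F' z) ≤ dist (F z) x + dist x w + dist w (F' z) := dist_triangle4 ..
    _ ≤ ε + ε + ε := by
      rw [dist_comm x w, dist_comm w (F' z)]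
      exact add_le_add (add_le_add (hF z) hwx) (hFw.trans hε)
    _ = 3 * ε := by ring

theorem IsPatched.exists_isPatched_dist_le {Y : Set ℂ} (hY : IsFilled Y) {ε' : ℝ} (hε' : 0 < ε')
    (hε : ε' ≤ ε) {x y : ℂ} {p q : Path x y} {F : p.Homotopy q} (hF : IsPatched Y ε F) :
    ∃ F' : p.Homotopy q, IsPatched Y ε' F' ∧ ∀ z, dist (F z) (F' z) ≤ 3 * ε := by
  induction hF with
  | of_forall_mem F h => exact ⟨F, .of_forall_mem F h, fun z ↦ by simp; linarith⟩
  | of_forall_mem_closedBall F hp h =>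
    obtain ⟨F', hF', hdist⟩ := _root_.exists_isPatched_dist_le hε' hε h
    exact ⟨F', hF'.mono (filledHull_subset hp hY), hdist⟩
  | trans _ _ hF hG =>
    obtain ⟨F', hF', hFF'⟩ := hF
    obtain ⟨G', hG', hGG'⟩ := hG
    exact ⟨F'.trans G', hF'.trans hG', forall_rel_homotopy_trans (r := (dist · · ≤ _)) hFF' hGG'⟩
  | hcomp _ _ hF hG =>
    obtain ⟨F', hF', hFF'⟩ := hF
    obtain ⟨G', hG', hGG'⟩ := hG
    exact ⟨F'.hcomp G', hF'.hcomp hG', forall_rel_homotopy_hcomp (r := (dist · · ≤ _)) hFF' hGG'⟩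
  | symm _ hF =>
    obtain ⟨F', hF', hFF'⟩ := hF
    exact ⟨F'.symm, hF'.symm, fun z ↦ hFF' (σ z.1, z.2)⟩

theorem exists_homotopy_refl_forall_mem_filledHull {x : ℂ} (f : Path x x) :
    ∃ F : f.Homotopy (.refl x), ∀ z, F z ∈ filledHull (range f) := by
  let P (k : ℕ) (g : C(I × I, ℂ)) : Prop := ∃ F : f.Homotopy (.refl x),
    F.toContinuousMap = g ∧ IsPatched (filledHull (range f)) ((1 / 2) ^ k) F
  have hstart : ∃ g, P 0 g := by
    obtain ⟨F, hF⟩ := exists_isPatched_filledHull_range f (ε := (1 / 2) ^ 0) (by simp)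
    exact ⟨_, F, rfl, hF⟩
  have hstep (k : ℕ) (g : C(I × I, ℂ)) (hg : P k g) :
      ∃ g', P (k + 1) g' ∧ ∀ z, dist (g z) (g' z) ≤ 3 * (1 / 2) ^ k := by
    obtain ⟨F, rfl, hF⟩ := hg
    obtain ⟨F', hF', hdist⟩ := hF.exists_isPatched_dist_le (isFilled_filledHull _)
      (ε' := (1 / 2) ^ (k + 1)) (by positivity)
      (pow_le_pow_of_le_one (by norm_num) (by norm_num) k.le_succ)
    exact ⟨_, ⟨F', rfl, hF'⟩, hdist⟩
  obtain ⟨φ, g, hφ, hlim⟩ := exists_seq_tendsto_of_forall_exists_dist_le (by norm_num) hstart hstep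
  choose F hF hpatch using hφ
  have hFlim (z : I × I) : Tendsto (fun k ↦ F k z) atTop (𝓝 (g z)) := by
    simpa only [← hF] using! hlim z
  have heq (z : I × I) (w : ℂ) (h : ∀ k, F k z = w) : g z = w :=
    tendsto_nhds_unique (hFlim z) (by simp only [h, tendsto_const_nhds])
  let G : f.Homotopy (.refl x) := {
    toContinuousMap := g
    map_zero_left t := heq _ _ fun k ↦ (F k).apply_zero t
    map_one_left t := heq _ _ fun k ↦ (F k).apply_one t
    prop' t s hs := heq _ _ fun k ↦ (F k).prop' t s hs }
  refine ⟨G, fun z ↦ ?_⟩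
  choose w hwmem hwdist using fun k ↦ (hpatch k).exists_dist_le (by positivity) z
  have hdist : Tendsto (fun k ↦ dist (F k z) (w k)) atTop (𝓝 0) :=
    squeeze_zero (fun _ ↦ dist_nonneg) hwdist
      (tendsto_pow_atTop_nhds_zero_of_lt_one (by norm_num) (by norm_num))
  exact (isCompact_filledHull (isCompact_range f.continuous)).isClosed.mem_of_tendsto
    ((hFlim z).congr_dist hdist) (.of_forall hwmem)

end Patched

section LocallyConstant

open Set Metric Filter Topology

theorem eventually_thickening_inter_subset {X : Type*} [MetricSpace X] {A B : Set X}
    (hA : IsCompact A) (hB : IsCompact B) {ε : ℝ} (hε : 0 < ε) :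
    ∀ᶠ η in 𝓝[>] 0, thickening η A ∩ thickening η B ⊆ thickening ε (A ∩ B) := by
  have hmem := (hasBasis_nhdsSet_thickening (hA.inter hB)).mem_of_mem hε
  rw [hA.nhdsSet_inter_eq hB, ((hasBasis_nhdsSet_thickening hA).inf
    (hasBasis_nhdsSet_thickening hB)).mem_iff] at hmem
  obtain ⟨⟨δ, δ'⟩, ⟨hδ, hδ'⟩, hsub⟩ := hmem
  filter_upwards [Ioo_mem_nhdsGT (lt_min hδ hδ')] with η hη
  exact (inter_subset_inter (thickening_mono (hη.2.le.trans (min_le_left ..)) A)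
    (thickening_mono (hη.2.le.trans (min_le_right ..)) B)).trans hsub

theorem exists_forall_dist_lt_eq_of_isLocallyConstant {X G : Type*} [PseudoMetricSpace X]
    {T : Set X} (hT : IsCompact T) {U : X → G} (hU : IsLocallyConstant (T.domRestrict U)) :
    ∃ V : X → G, ∃ ρ > 0, ∀ p, ∀ t ∈ T, dist p t < ρ → V p = U t := by
  classical
  have : CompactSpace T := isCompact_iff_compactSpace.1 hT
  let _ : UniformSpace G := ⊥
  have hunif := CompactSpace.uniformContinuous_of_continuous hU.continuous
  obtain ⟨ρ, hρ, hUρ⟩ := Metric.mem_uniformity_dist.1 <|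
    mem_map.1 (hunif (mem_principal_self SetRel.id))
  let V (p : X) : G := if h : ∃ t : T, dist p t < ρ / 2 then U h.choose else U p
  refine ⟨V, ρ / 2, by positivity, fun p t ht hpt ↦ ?_⟩
  have h : ∃ t : T, dist p t < ρ / 2 := ⟨⟨t, ht⟩, hpt⟩
  have hdist : dist (h.choose : X) t < ρ :=
    (dist_triangle_left (h.choose : X) t p).trans_lt (by linarith [h.choose_spec])
  exact (dif_pos h).trans (hUρ (a := h.choose) (b := ⟨t, ht⟩) hdist)

theorem eq_of_mem_connectedComponentIn {X G : Type*} [TopologicalSpace X] {F : Set X}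
    {W : X → G} (hW : IsLocallyConstant (F.domRestrict W)) {x y : X}
    (hxy : y ∈ connectedComponentIn F x) : W x = W y := by
  have hx : x ∈ F := connectedComponentIn_nonempty_iff.1 ⟨y, hxy⟩
  rw [connectedComponentIn_eq_image hx] at hxy
  obtain ⟨z, hz, rfl⟩ := hxy
  exact hW.apply_eq_of_isPreconnected isPreconnected_connectedComponent mem_connectedComponent hz

end LocallyConstant

section Helly

open Set Metric Filter Topology

variable {G : Type*} [CommGroup G] {h v u h' v' u' : ℤ → ℤ → G} {s : ℤ × ℤ} {Z₀ Z₁ Z₂ : Set ℂ}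
  {d η : ℝ}

theorem IsPotentialAt.mul (hu : IsPotentialAt h v u s) (hu' : IsPotentialAt h' v' u' s) :
    IsPotentialAt (h * h') (v * v') (u * u') s := by
  simp only [IsPotentialAt, Pi.mul_apply] at *
  simp only [mul_mul_mul_comm, hu, hu', and_self]

theorem IsPotentialAt.div (hu : IsPotentialAt h v u s) (hu' : IsPotentialAt h v u' s) :
    IsPotentialAt 1 1 (u / u') s := by
  obtain ⟨⟨h₁, h₂⟩, h₃, h₄⟩ := hu
  obtain ⟨⟨h₁', h₂'⟩, h₃', h₄'⟩ := hu'
  simp only [IsPotentialAt, Pi.div_apply, Pi.one_apply, mul_one]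
  refine ⟨⟨?_, ?_⟩, ?_, ?_⟩
  · rw [← h₁, ← h₁', mul_div_mul_right_eq_div]
  · rw [← h₂, ← h₂', mul_div_mul_right_eq_div]
  · rw [← h₃, ← h₃', mul_div_mul_right_eq_div]
  · rw [← h₄, ← h₄', mul_div_mul_right_eq_div]

theorem IsPotentialAt.isFlatAt (hu : IsPotentialAt h v u s) : IsFlatAt h v s := by
  obtain ⟨⟨hright, htop⟩, hright_top, htop_right⟩ := hu
  refine mul_left_cancel (a := u s.1 s.2) ?_
  rw [← mul_assoc, ← mul_assoc, hright, htop, hright_top, htop_right]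

theorem exists_isFlatAt_one_and_isFlatAt_div {A D : Set (ℤ × ℤ)}
    (hflat : ∀ s ∈ A ∩ D, IsFlatAt h v s) :
    ∃ c, (∀ s ∈ A, IsFlatAt c 1 s) ∧ ∀ s ∈ D, IsFlatAt (h / c) v s := by
  classical
  let n (i j : ℤ) : G :=
    if (i, j) ∈ D then v i j * h i (j + 1) / (h i j * v (i + 1) j) else 1
  choose c hc using fun i ↦ exists_forall_mul_eq_add_one (n i) 0
  have hn {i j : ℤ} (hij : (i, j) ∈ A) : n i j = 1 := by
    simp only [n]
    split_ifs with hD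
    · exact div_eq_one.2 (hflat _ ⟨hij, hD⟩).symm
    · rfl
  refine ⟨c, fun ⟨i, j⟩ hs ↦ ?_, fun ⟨i, j⟩ hs ↦ ?_⟩
  · simp [IsFlatAt, ← (hc i).2 j, hn hs]
  · have hnD : v i j * h i (j + 1) = n i j * (h i j * v (i + 1) j) := by simp [n, hs]
    simp only [IsFlatAt, Pi.div_apply, ← (hc i).2 j]
    rw [div_mul_eq_mul_div, mul_div_assoc', hnD, mul_comm (c i j), mul_div_mul_left_eq_div]

theorem meetingSquares_mono {Y Z : Set ℂ} (hYZ : Y ⊆ Z) : meetingSquares d Y ⊆ meetingSquares d Z :=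
  fun _ hs ↦ hs.mono (inter_subset_inter_right _ hYZ)

theorem gridSquare_subset_thickening_of_mem_meetingSquares {Y : Set ℂ} (hd : 0 < d)
    (hdη : 4 * d < η) (hs : s ∈ meetingSquares d Y) : gridSquare d s ⊆ thickening η Y := by
  obtain ⟨y, hys, hyY⟩ := hs
  exact fun p hp ↦ mem_thickening_iff.2
    ⟨y, hyY, (dist_le_of_mem_gridSquare hd (by simp) hp hys).trans_lt hdη⟩

theorem eventually_exists_isPotentialAt_mul (h₀ : IsCompact Z₀) (h₁ : IsCompact Z₁)
    (h₂ : IsCompact Z₂) (hfill₀ : IsFilled Z₀) (hfill₁ : IsFilled Z₁) (hfill₂ : IsFilled Z₂)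
    (hη : 0 < η) :
    ∀ᶠ d in 𝓝[>] 0, ∀ h v : ℤ → ℤ → G,
      (∀ s, gridSquare d s ⊆ thickening η Z₀ ∩ thickening η Z₂ → IsFlatAt h v s) →
      (∀ s, gridSquare d s ⊆ thickening η Z₁ ∩ thickening η Z₂ → IsFlatAt h v s) →
      ∃ v₀ v₁ v₂ : ℤ → ℤ → G,
        (∀ s ∈ meetingSquares d (Z₀ ∩ Z₁), IsPotentialAt 1 1 (v₀ / v₁) s) ∧
        (∀ s ∈ meetingSquares d (Z₀ ∩ Z₂), IsPotentialAt h v (v₀ * v₂) s) ∧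
        ∀ s ∈ meetingSquares d (Z₁ ∩ Z₂), IsPotentialAt h v (v₁ * v₂) s := by
  filter_upwards [eventually_exists_isPotentialAt G h₀ hfill₀ hη,
    eventually_exists_isPotentialAt G h₁ hfill₁ hη,
    eventually_exists_isPotentialAt G h₂ hfill₂ hη] with d hpot₀ hpot₁ hpot₂ h v hflat₀ hflat₁
  obtain ⟨c, hc, hhc⟩ := exists_isFlatAt_one_and_isFlatAt_div (h := h) (v := v)
    (A := {s | gridSquare d s ⊆ thickening η Z₀} ∪ {s | gridSquare d s ⊆ thickening η Z₁})
    (D := {s | gridSquare d s ⊆ thickening η Z₂}) fun s ⟨hs, hs₂⟩ ↦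
      hs.elim (fun hs₀ ↦ hflat₀ s (subset_inter hs₀ hs₂))
        fun hs₁ ↦ hflat₁ s (subset_inter hs₁ hs₂)
  obtain ⟨v₀, hv₀⟩ := hpot₀ c 1 fun s hs ↦ hc s (.inl hs)
  obtain ⟨v₁, hv₁⟩ := hpot₁ c 1 fun s hs ↦ hc s (.inr hs)
  obtain ⟨v₂, hv₂⟩ := hpot₂ (h / c) v hhc
  have hmul {w : ℤ → ℤ → G} {s} (hw : IsPotentialAt c 1 w s) (hs : s ∈ meetingSquares d Z₂) :
      IsPotentialAt h v (w * v₂) s := by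
    simpa using hw.mul (hv₂ s hs)
  have hleft {Y Z : Set ℂ} : meetingSquares d (Y ∩ Z) ⊆ meetingSquares d Y :=
    meetingSquares_mono inter_subset_left
  have hright {Y Z : Set ℂ} : meetingSquares d (Y ∩ Z) ⊆ meetingSquares d Z :=
    meetingSquares_mono inter_subset_right
  exact ⟨v₀, v₁, v₂, fun s hs ↦ (hv₀ s (hleft hs)).div (hv₁ s (hright hs)),
    fun s hs ↦ hmul (hv₀ s (hleft hs)) (hright hs), fun s hs ↦ hmul (hv₁ s (hleft hs)) (hright hs)⟩

theorem exists_isPotentialAt_of_subset (u : ℤ → ℤ → G) (A : Set (ℤ × ℤ)) :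
    ∃ h v, (∀ s, Icc s (s + 1) ⊆ A → IsPotentialAt h v u s) ∧
      ∀ s, (∀ t ∈ Icc s (s + 1) ∩ A, ∀ t' ∈ Icc s (s + 1), u t.1 t.2 = u t'.1 t'.2) →
        IsPotentialAt h v 1 s := by
  classical
  refine ⟨fun i j ↦ if (i, j) ∈ A then u (i + 1) j / u i j else 1,
    fun i j ↦ if (i, j) ∈ A then u i (j + 1) / u i j else 1, fun s hs ↦ ?_, fun s hs ↦ ?_⟩
  · have hs' {t} (ht : (t.1 = s.1 ∨ t.1 = s.1 + 1) ∧ (t.2 = s.2 ∨ t.2 = s.2 + 1)) : t ∈ A :=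
      hs (mem_corners_iff.2 ht)
    simp [IsPotentialAt, hs']
  · have hs' {i j i' j' : ℤ} (ht : (i, j) ∈ Icc s (s + 1)) (ht' : (i', j') ∈ Icc s (s + 1))
        (hA : (i, j) ∈ A) : u i' j' / u i j = 1 :=
      div_eq_one.2 (hs (i, j) ⟨ht, hA⟩ (i', j') ht').symm
    simp only [IsPotentialAt, Pi.one_apply, one_mul, ite_eq_right_iff]
    refine ⟨⟨?_, ?_⟩, ?_, ?_⟩ <;>
      exact hs' (mem_corners_iff.2 (by simp)) (mem_corners_iff.2 (by simp))

theorem isLocallyConstant_gridIndex {G : Type*} [Group G] {Y : Set ℂ} {w : ℤ → ℤ → G} (hd : 0 < d)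
    (hw : ∀ s ∈ meetingSquares d Y, IsPotentialAt 1 1 w s) :
    IsLocallyConstant (Y.domRestrict fun x ↦ w (gridIndex d x).1 (gridIndex d x).2) := by
  have hcorner (x : Y) {t} (ht : t ∈ Icc (gridIndex d x) (gridIndex d x + 1)) :
      w t.1 t.2 = w (gridIndex d x).1 (gridIndex d x).2 := by
    obtain ⟨⟨hright, htop⟩, -, hdiag⟩ := hw _ ⟨x, mem_gridSquare_gridIndex hd x, x.2⟩
    simp only [Pi.one_apply, mul_one] at hright htop hdiag
    obtain ⟨i, j⟩ := t
    rw [mem_corners_iff] at ht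
    obtain ⟨rfl | rfl, rfl | rfl⟩ := ht
    exacts [rfl, htop.symm, hright.symm, (htop.trans hdiag).symm]
  refine (IsLocallyConstant.iff_eventually_eq _).2 fun x ↦ ?_
  filter_upwards [ball_mem_nhds x hd] with y hy
  have hidx := dist_le_one_of_mem_gridSquare (mem_gridSquare_gridIndex hd (y : ℂ))
    (mem_gridSquare_gridIndex hd (x : ℂ)) hy
  exact (hcorner y (sup_mem_corners hidx).1).symm.trans (hcorner x (sup_mem_corners hidx).2)

theorem exists_eventually_exists_isPotentialAt {A B : Set ℂ} (hA : IsCompact A) (hB : IsCompact B)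
    {U : ℂ → G} (hU : IsLocallyConstant ((A ∩ B).domRestrict U)) :
    ∃ η > 0, ∀ᶠ d in 𝓝[>] 0, ∃ u h v : ℤ → ℤ → G,
      (∀ x ∈ A ∩ B, u (gridIndex d x).1 (gridIndex d x).2 = U x) ∧
      (∀ s, gridSquare d s ⊆ thickening η A → IsPotentialAt h v u s) ∧
      ∀ s, gridSquare d s ⊆ thickening η B → IsPotentialAt h v 1 s := by
  obtain ⟨V, ρ, hρ, hV⟩ := exists_forall_dist_lt_eq_of_isLocallyConstant (hA.inter hB) hU
  obtain ⟨η, hη, hηρ⟩ := (eventually_mem_nhdsWithin.and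
    (eventually_thickening_inter_subset hA hB (half_pos hρ))).exists
  have hsmall : ∀ᶠ d in 𝓝[>] 0, d < ρ / 8 :=
    mem_nhdsWithin_of_mem_nhds (gt_mem_nhds (by positivity))
  refine ⟨η, hη, ?_⟩
  filter_upwards [self_mem_nhdsWithin, hsmall] with d (hd : 0 < d) hdρ
  let P (t : ℤ × ℤ) : ℂ := gridVertex d t
  obtain ⟨h, v, hA', hB'⟩ := exists_isPotentialAt_of_subset (fun i j ↦ V (P (i, j)))
    {t | P t ∈ thickening η A}
  refine ⟨fun i j ↦ V (P (i, j)), h, v, fun x hx ↦ hV _ x hx ?_, fun s hs ↦ hA' s fun t ht ↦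
    hs (gridVertex_mem_gridSquare hd ht), fun s hs ↦ hB' s fun t ht t' ht' ↦ ?_⟩
  · have hcorner : gridVertex d (gridIndex d x) ∈ gridSquare d (gridIndex d x) :=
      gridVertex_mem_gridSquare hd (by simp)
    linarith [dist_le_of_mem_gridSquare hd (by simp) hcorner (mem_gridSquare_gridIndex hd x)]
  · have hPt := gridVertex_mem_gridSquare hd ht.1
    have hPt' := gridVertex_mem_gridSquare hd ht'
    obtain ⟨x, hx, htx⟩ := mem_thickening_iff.1 (hηρ ⟨ht.2, hs hPt⟩)
    have htt' : dist (P t') (P t) ≤ 4 * d := dist_le_of_mem_gridSquare hd (by simp) hPt' hPt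
    rw [hV _ x hx (by linarith), hV _ x hx (by linarith [dist_triangle (P t') (P t) x])]

theorem exists_isLocallyConstant_mul (h₀ : IsCompact Z₀) (h₁ : IsCompact Z₁)
    (h₂ : IsCompact Z₂) (hfill₀ : IsFilled Z₀) (hfill₁ : IsFilled Z₁) (hfill₂ : IsFilled Z₂)
    {U : ℂ → G} (hU : IsLocallyConstant ((Z₀ ∩ Z₁ ∩ Z₂).domRestrict U)) :
    ∃ W₀₁ W₀₂ W₁₂ : ℂ → G, IsLocallyConstant ((Z₀ ∩ Z₁).domRestrict W₀₁) ∧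
      IsLocallyConstant ((Z₀ ∩ Z₂).domRestrict W₀₂) ∧
      IsLocallyConstant ((Z₁ ∩ Z₂).domRestrict W₁₂) ∧
      ∀ x ∈ Z₀ ∩ Z₁ ∩ Z₂, U x = W₀₁ x * W₀₂ x * W₁₂ x := by
  rw [inter_inter_distrib_right] at *
  obtain ⟨η, hη, hlabels⟩ := exists_eventually_exists_isPotentialAt (h₀.inter h₂) (h₁.inter h₂) hU
  obtain ⟨η', hη', hη₀, hη₁⟩ := (eventually_mem_nhdsWithin.and
    ((eventually_thickening_inter_subset h₀ h₂ hη).and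
      (eventually_thickening_inter_subset h₁ h₂ hη))).exists
  have hsmall : ∀ᶠ d in 𝓝[>] 0, d < η / 4 :=
    mem_nhdsWithin_of_mem_nhds (gt_mem_nhds (by positivity))
  obtain ⟨d, (hd : 0 < d), hdη, ⟨u, h, v, hu, hu₀₂, hu₁₂⟩, hsplit⟩ :=
    (eventually_mem_nhdsWithin.and (hsmall.and (hlabels.and
      (eventually_exists_isPotentialAt_mul (G := G) h₀ h₁ h₂ hfill₀ hfill₁ hfill₂ hη')))).exists
  obtain ⟨v₀, v₁, v₂, hv₀₁, hv₀₂, hv₁₂⟩ := hsplit h v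
    (fun s hs ↦ (hu₀₂ s (hs.trans hη₀)).isFlatAt) (fun s hs ↦ (hu₁₂ s (hs.trans hη₁)).isFlatAt)
  have hthick {Y : Set ℂ} {s} (hs : s ∈ meetingSquares d Y) : gridSquare d s ⊆ thickening η Y :=
    gridSquare_subset_thickening_of_mem_meetingSquares hd (by linarith) hs
  refine ⟨_, _, _, isLocallyConstant_gridIndex hd hv₀₁,
    isLocallyConstant_gridIndex hd fun s hs ↦ (hu₀₂ s (hthick hs)).div (hv₀₂ s hs),
    isLocallyConstant_gridIndex hd fun s hs ↦ (hv₁₂ s hs).div (hu₁₂ s (hthick hs)),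
    fun x hx ↦ ?_⟩
  rw [← hu x hx]
  simp only [Pi.mul_apply, Pi.div_apply, Pi.one_apply, div_one]
  rw [div_mul_div_comm, div_mul_eq_mul_div, eq_div_iff_mul_eq']
  ac_rfl

theorem mem_connectedComponentIn_inter_inter {x y : ℂ} (h₀ : IsCompact Z₀) (h₁ : IsCompact Z₁)
    (h₂ : IsCompact Z₂) (hfill₀ : IsFilled Z₀) (hfill₁ : IsFilled Z₁) (hfill₂ : IsFilled Z₂)
    (h₀₁ : y ∈ connectedComponentIn (Z₀ ∩ Z₁) x) (h₀₂ : y ∈ connectedComponentIn (Z₀ ∩ Z₂) x)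
    (h₁₂ : y ∈ connectedComponentIn (Z₁ ∩ Z₂) x) :
    y ∈ connectedComponentIn (Z₀ ∩ Z₁ ∩ Z₂) x := by
  classical
  have hx : x ∈ Z₀ ∩ Z₁ ∩ Z₂ :=
    ⟨connectedComponentIn_nonempty_iff.1 ⟨y, h₀₁⟩, (connectedComponentIn_nonempty_iff.1 ⟨y, h₀₂⟩).2⟩
  have hy : y ∈ Z₀ ∩ Z₁ ∩ Z₂ :=
    ⟨connectedComponentIn_subset _ _ h₀₁, (connectedComponentIn_subset _ _ h₀₂).2⟩
  have : CompactSpace ↥(Z₀ ∩ Z₁ ∩ Z₂) := isCompact_iff_compactSpace.1 ((h₀.inter h₁).inter h₂)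
  rw [connectedComponentIn_eq_image hx, connectedComponent_eq_iInter_isClopen]
  refine ⟨⟨y, hy⟩, mem_iInter.2 fun ⟨K, hK, hxK⟩ ↦ ?_, rfl⟩
  let f (z : ↥(Z₀ ∩ Z₁ ∩ Z₂)) : Multiplicative ℤ := .ofAdd (LocallyConstant.charFn ℤ hK z)
  let U : ℂ → Multiplicative ℤ := Function.extend Subtype.val f 1
  have hUf (z : ↥(Z₀ ∩ Z₁ ∩ Z₂)) : U z = f z := Subtype.val_injective.extend_apply f 1 z
  have hU : IsLocallyConstant ((Z₀ ∩ Z₁ ∩ Z₂).domRestrict U) := by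
    rw [show (Z₀ ∩ Z₁ ∩ Z₂).domRestrict U = f from funext hUf]
    exact (LocallyConstant.charFn ℤ hK).isLocallyConstant.comp Multiplicative.ofAdd
  obtain ⟨W₀₁, W₀₂, W₁₂, hW₀₁, hW₀₂, hW₁₂, hW⟩ :=
    exists_isLocallyConstant_mul h₀ h₁ h₂ hfill₀ hfill₁ hfill₂ hU
  have hUxy : U x = U y := by
    rw [hW x hx, hW y hy, eq_of_mem_connectedComponentIn hW₀₁ h₀₁,
      eq_of_mem_connectedComponentIn hW₀₂ h₀₂, eq_of_mem_connectedComponentIn hW₁₂ h₁₂]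
  rw [hUf ⟨x, hx⟩, hUf ⟨y, hy⟩] at hUxy
  exact (LocallyConstant.charFn_eq_one ℤ _ hK).1 <| (Multiplicative.ofAdd.injective hUxy).symm.trans
    ((LocallyConstant.charFn_eq_one ℤ _ hK).2 hxK)

end Helly

section ArcChain

open Set Metric unitInterval Filter Topology

/-- The set `Y` is uniformly locally connected: any two of its sufficiently close points lie in a
connected subset of `Y` of small diameter. -/
def IsUniformlyLocConnected {X : Type*} [PseudoMetricSpace X] (Y : Set X) : Prop :=
  ∀ ε > 0, ∃ δ > 0, ∀ p ∈ Y, ∀ q ∈ Y, dist p q < δ → q ∈ connectedComponentIn (Y ∩ closedBall p ε) p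

/-- The paths composed of arcs of radius at most `ε` whose endpoints lie in `Y` at distance less
than `δ`. -/
inductive IsArcChain {X : Type*} [PseudoMetricSpace X] (Y : Set X) (ε δ : ℝ) :
    ∀ {x y : X}, Path x y → Prop
  | arc {x y : X} (hx : x ∈ Y) (hy : y ∈ Y) (hxy : dist x y < δ) (p : Path x y)
      (hp : ∀ t, p t ∈ closedBall x ε) : IsArcChain Y ε δ p
  | trans {x y z : X} {p : Path x y} {q : Path y z} (hp : IsArcChain Y ε δ p)
      (hq : IsArcChain Y ε δ q) : IsArcChain Y ε δ (p.trans q)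

theorem forall_rel_path_trans {X : Type*} [TopologicalSpace X] {r : X → X → Prop}
    {x y z x' y' z' : X} {p : Path x y} {q : Path y z} {p' : Path x' y'} {q' : Path y' z'}
    (hp : ∀ t, r (p t) (p' t)) (hq : ∀ t, r (q t) (q' t)) (t : I) :
    r (p.trans q t) (p'.trans q' t) := by
  simp only [Path.trans_apply]
  split_ifs
  exacts [hp _, hq _]

theorem IsArcChain.exists_dist_le {X : Type*} [PseudoMetricSpace X] {Y : Set X} {ε δ : ℝ} {x y : X}
    {p : Path x y} (hp : IsArcChain Y ε δ p) : ∀ t, ∃ w ∈ Y, dist (p t) w ≤ ε := by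
  induction hp with
  | arc hx _ _ p hp => exact fun t ↦ ⟨_, hx, hp t⟩
  | trans _ _ hp hq =>
    exact forall_rel_path_trans (r := fun z _ ↦ ∃ w ∈ _, dist z w ≤ ε) (p' := .refl x)
      (q' := .refl x) hp hq

variable {E : Type*} [NormedAddCommGroup E] [NormedSpace ℝ E] {Y C T : Set E} {x y c : E}
  {r ε δ ε' δ' : ℝ}

theorem exists_isArcChain_of_isPreconnected (hδ : 0 < δ) (hδε : δ ≤ ε) (hC : IsPreconnected C)
    (hCY : C ⊆ Y) (hCr : C ⊆ closedBall c r) (hx : x ∈ C) (hy : y ∈ C) :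
    ∃ p : Path x y, IsArcChain Y ε δ p ∧ ∀ t, p t ∈ closedBall c r := by
  have hsegment (a : E) (ha : a ∈ C) (b : E) (hb : b ∈ C) (hab : dist a b < δ) :
      ∃ p : Path a b, IsArcChain Y ε δ p ∧ ∀ t, p t ∈ closedBall c r := by
    have hmem (t : I) : Path.segment a b t ∈ segment ℝ a b := Path.range_segment a b ▸ ⟨t, rfl⟩
    refine ⟨.segment a b, .arc (hCY ha) (hCY hb) hab _ fun t ↦ ?_, fun t ↦
      (convex_closedBall c r).segment_subset (hCr ha) (hCr hb) (hmem t)⟩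
    rw [mem_closedBall']
    exact (dist_le_of_mem_segment (hmem t)).trans (hab.le.trans hδε)
  refine hC.induction₂'
    (fun a b ↦ ∃ p : Path a b, IsArcChain Y ε δ p ∧ ∀ t, p t ∈ closedBall c r)
    (fun a ha ↦ ?_) (fun a b d _ _ _ hab hbd ↦ ?_) hx hy
  · filter_upwards [mem_nhdsWithin_of_mem_nhds (ball_mem_nhds a hδ), self_mem_nhdsWithin]
      with b hba hb
    exact ⟨hsegment a ha b hb (mem_ball'.1 hba), hsegment b hb a ha hba⟩
  · obtain ⟨p, hp, hpr⟩ := hab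
    obtain ⟨q, hq, hqr⟩ := hbd
    exact ⟨p.trans q, hp.trans hq,
      forall_rel_path_trans (r := fun z _ ↦ z ∈ closedBall c r) (p' := .refl c) (q' := .refl c)
        hpr hqr⟩

theorem IsArcChain.exists_isArcChain_dist_le (hδ' : 0 < δ') (hδε' : δ' ≤ ε')
    (hY : ∀ a ∈ Y, ∀ b ∈ Y, dist a b < δ → b ∈ connectedComponentIn (Y ∩ closedBall a ε) a)
    {p : Path x y} (hp : IsArcChain Y ε δ p) :
    ∃ p' : Path x y, IsArcChain Y ε' δ' p' ∧ ∀ t, dist (p t) (p' t) ≤ 2 * ε := by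
  induction hp with
  | @arc a b ha hb hab p hp =>
    have hba := hY a ha b hb hab
    have hsub := connectedComponentIn_subset (Y ∩ closedBall a ε) a
    obtain ⟨p', hp', hpa⟩ := exists_isArcChain_of_isPreconnected hδ' hδε'
      isPreconnected_connectedComponentIn (hsub.trans inter_subset_left)
      (hsub.trans inter_subset_right)
      (mem_connectedComponentIn (connectedComponentIn_nonempty_iff.1 ⟨b, hba⟩)) hba
    refine ⟨p', hp', fun t ↦ (dist_triangle_right _ _ a).trans ?_⟩
    linarith [mem_closedBall.1 (hp t), mem_closedBall.1 (hpa t)]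
  | trans _ _ hp hq =>
    obtain ⟨p', hp', hpp'⟩ := hp
    obtain ⟨q', hq', hqq'⟩ := hq
    exact ⟨p'.trans q', hp'.trans hq', forall_rel_path_trans (r := (dist · · ≤ _)) hpp' hqq'⟩

theorem IsUniformlyLocConnected.joinedIn [CompleteSpace E] (hY : IsUniformlyLocConnected Y)
    (hconn : IsPreconnected Y) (hbdd : Bornology.IsBounded Y) (hT : IsClosed T) (hYT : Y ⊆ T)
    (hx : x ∈ Y) (hy : y ∈ Y) : JoinedIn T x y := by
  have hscale (k : ℕ) : ∃ δ > 0, δ ≤ (1 / 2 : ℝ) ^ k ∧ ∀ a ∈ Y, ∀ b ∈ Y, dist a b < δ →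
      b ∈ connectedComponentIn (Y ∩ closedBall a ((1 / 2) ^ k)) a := by
    obtain ⟨δ, hδ, h⟩ := hY ((1 / 2) ^ k) (by positivity)
    exact ⟨min δ ((1 / 2) ^ k), by positivity, min_le_right _ _, fun a ha b hb hab ↦
      h a ha b hb (hab.trans_le (min_le_left _ _))⟩
  choose δ hδ hδk hconnδ using hscale
  let P (k : ℕ) (f : C(I, E)) : Prop :=
    ∃ p : Path x y, p.toContinuousMap = f ∧ IsArcChain Y ((1 / 2) ^ k) (δ k) p
  have hstart : ∃ f, P 0 f := by
    obtain ⟨R, hR⟩ := hbdd.subset_closedBall x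
    obtain ⟨p, hp, -⟩ := exists_isArcChain_of_isPreconnected (hδ 0) (hδk 0) hconn
      subset_rfl hR hx hy
    exact ⟨_, p, rfl, hp⟩
  have hstep (k : ℕ) (f : C(I, E)) (hf : P k f) :
      ∃ f', P (k + 1) f' ∧ ∀ t, dist (f t) (f' t) ≤ 2 * (1 / 2) ^ k := by
    obtain ⟨p, rfl, hp⟩ := hf
    obtain ⟨p', hp', hdist⟩ :=
      hp.exists_isArcChain_dist_le (hδ (k + 1)) (hδk (k + 1)) (hconnδ k)
    exact ⟨_, ⟨p', rfl, hp'⟩, hdist⟩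
  obtain ⟨φ, g, hφ, hlim⟩ := exists_seq_tendsto_of_forall_exists_dist_le (by norm_num) hstart hstep
  choose p hp hchain using hφ
  have hplim (t : I) : Tendsto (fun k ↦ p k t) atTop (𝓝 (g t)) := by
    simpa only [← hp] using! hlim t
  refine ⟨⟨g, tendsto_nhds_unique (hplim 0) (by simp), tendsto_nhds_unique (hplim 1) (by simp)⟩,
    fun t ↦ ?_⟩
  choose w hw hdist using fun k ↦ (hchain k).exists_dist_le t
  have hdist₀ : Tendsto (fun k ↦ dist (p k t) (w k)) atTop (𝓝 0) :=
    squeeze_zero (fun _ ↦ dist_nonneg) hdist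
      (tendsto_pow_atTop_nhds_zero_of_lt_one (by norm_num) (by norm_num))
  exact hT.mem_of_tendsto ((hplim t).congr_dist hdist₀) (.of_forall fun k ↦ hYT (hw k))

end ArcChain

section TripleIntersection

open Set Metric

theorem mem_connectedComponentIn_of_joinedIn {X : Type*} [TopologicalSpace X] {Y : Set X} {x y : X}
    (h : JoinedIn Y x y) : y ∈ connectedComponentIn Y x :=
  have hconn := (isPathConnected_pathComponentIn h.source_mem).isConnected.isPreconnected
  hconn.subset_connectedComponentIn (mem_pathComponentIn_self h.source_mem) pathComponentIn_subset h

theorem isUniformlyLocConnected_connectedComponentIn_inter_inter {Z₀ Z₁ Z₂ : Set ℂ} {x : ℂ}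
    (h₀ : IsCompact Z₀) (h₁ : IsCompact Z₁) (h₂ : IsCompact Z₂) (hfill₀ : IsFilled Z₀)
    (hfill₁ : IsFilled Z₁) (hfill₂ : IsFilled Z₂) (hloc₀ : IsUniformlyLocPathConnected Z₀)
    (hloc₁ : IsUniformlyLocPathConnected Z₁) (hloc₂ : IsUniformlyLocPathConnected Z₂) :
    IsUniformlyLocConnected (connectedComponentIn (Z₀ ∩ Z₁ ∩ Z₂) x) := by
  intro ε hε
  obtain ⟨δ₀, hδ₀, hjoin₀⟩ := hloc₀ ε hε
  obtain ⟨δ₁, hδ₁, hjoin₁⟩ := hloc₁ ε hε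
  obtain ⟨δ₂, hδ₂, hjoin₂⟩ := hloc₂ ε hε
  refine ⟨min δ₀ (min δ₁ δ₂), by positivity, fun p hp q hq hpq ↦ ?_⟩
  obtain ⟨hpq₀, hpq₁, hpq₂⟩ : _ ∧ _ ∧ _ := by simpa only [lt_inf_iff] using hpq
  have hsub := connectedComponentIn_subset (Z₀ ∩ Z₁ ∩ Z₂) x
  have hpZ := hsub hp
  have hqZ := hsub hq
  have hball : IsFilled (closedBall p ε) :=
    isFilled_of_convex (convex_closedBall p ε) ⟨p, mem_closedBall_self hε.le⟩
  have hqcomp : q ∈ connectedComponentIn (Z₀ ∩ Z₁ ∩ Z₂) p := connectedComponentIn_eq hp ▸ hq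
  have hq₀₁ : q ∈ connectedComponentIn (Z₀ ∩ Z₁ ∩ closedBall p ε) p :=
    mem_connectedComponentIn_inter_inter h₀ h₁ (isCompact_closedBall p ε) hfill₀ hfill₁ hball
      (connectedComponentIn_mono p inter_subset_left hqcomp)
      (mem_connectedComponentIn_of_joinedIn <| hjoin₀ p hpZ.1.1 q hqZ.1.1 hpq₀)
      (mem_connectedComponentIn_of_joinedIn <| hjoin₁ p hpZ.1.2 q hqZ.1.2 hpq₁)
  have hq₀₁₂ : q ∈ connectedComponentIn (Z₀ ∩ Z₁ ∩ Z₂ ∩ closedBall p ε) p :=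
    mem_connectedComponentIn_inter_inter (h₀.inter h₁) h₂ (isCompact_closedBall p ε)
      (hfill₀.inter hfill₁) hfill₂ hball hqcomp hq₀₁
      (mem_connectedComponentIn_of_joinedIn <| hjoin₂ p hpZ.2 q hqZ.2 hpq₂)
  have hcomp := connectedComponentIn_subset (Z₀ ∩ Z₁ ∩ Z₂ ∩ closedBall p ε) p
  have hpcomp : p ∈ connectedComponentIn (Z₀ ∩ Z₁ ∩ Z₂ ∩ closedBall p ε) p :=
    mem_connectedComponentIn ⟨hpZ, mem_closedBall_self hε.le⟩
  refine isPreconnected_connectedComponentIn.subset_connectedComponentIn hpcomp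
    (subset_inter ?_ (hcomp.trans inter_subset_right)) hq₀₁₂
  rw [connectedComponentIn_eq hp]
  exact isPreconnected_connectedComponentIn.subset_connectedComponentIn hpcomp
    (hcomp.trans inter_subset_left)

theorem joinedIn_inter_inter_of_isFilled {Z₀ Z₁ Z₂ : Set ℂ} {x y : ℂ}
    (h₀ : IsCompact Z₀) (h₁ : IsCompact Z₁) (h₂ : IsCompact Z₂) (hfill₀ : IsFilled Z₀)
    (hfill₁ : IsFilled Z₁) (hfill₂ : IsFilled Z₂) (hloc₀ : IsUniformlyLocPathConnected Z₀)
    (hloc₁ : IsUniformlyLocPathConnected Z₁) (hloc₂ : IsUniformlyLocPathConnected Z₂)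
    (h₀₁ : JoinedIn (Z₀ ∩ Z₁) x y) (h₀₂ : JoinedIn (Z₀ ∩ Z₂) x y)
    (h₁₂ : JoinedIn (Z₁ ∩ Z₂) x y) : JoinedIn (Z₀ ∩ Z₁ ∩ Z₂) x y := by
  have hZ : IsCompact (Z₀ ∩ Z₁ ∩ Z₂) := (h₀.inter h₁).inter h₂
  have hsub := connectedComponentIn_subset (Z₀ ∩ Z₁ ∩ Z₂) x
  exact (isUniformlyLocConnected_connectedComponentIn_inter_inter h₀ h₁ h₂ hfill₀ hfill₁ hfill₂
    hloc₀ hloc₁ hloc₂).joinedIn isPreconnected_connectedComponentIn (hZ.isBounded.subset hsub)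
    hZ.isClosed hsub (mem_connectedComponentIn ⟨h₀₁.source_mem, h₀₂.source_mem.2⟩)
    (mem_connectedComponentIn_inter_inter h₀ h₁ h₂ hfill₀ hfill₁ hfill₂
      (mem_connectedComponentIn_of_joinedIn h₀₁) (mem_connectedComponentIn_of_joinedIn h₀₂)
      (mem_connectedComponentIn_of_joinedIn h₁₂))

variable {S S₀ S₁ S₂ : Set ℂ} {x y : ℂ}

theorem filledHull_range_subset_of_isSimplyConnected (hS : IsSimplyConnected S) (γ : Path x y)
    (hγ : ∀ t, γ t ∈ S) : filledHull (range γ) ⊆ S := by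
  have : SimplyConnectedSpace S := hS
  let γ' : Path (⟨x, by simpa using hγ 0⟩ : S) ⟨y, by simpa using hγ 1⟩ :=
    { toFun := fun t ↦ ⟨γ t, hγ t⟩
      source' := by simp
      target' := by simp }
  exact filledHull_range_path_subset γ'

theorem exists_isFilled_of_isSimplyConnected (hS : IsSimplyConnected S) (γ γ' : Path x y)
    (hγ : ∀ t, γ t ∈ S) (hγ' : ∀ t, γ' t ∈ S) :
    ∃ Z ⊆ S, IsCompact Z ∧ IsFilled Z ∧ IsUniformlyLocPathConnected Z ∧
      (∀ t, γ t ∈ Z) ∧ ∀ t, γ' t ∈ Z := by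
  let ρ := γ.trans γ'.symm
  have hrange : range ρ = range γ ∪ range γ' := by rw [Path.trans_range, Path.symm_range]
  have hρ : IsCompact (range ρ) := isCompact_range ρ.continuous
  refine ⟨filledHull (range ρ), filledHull_range_subset_of_isSimplyConnected hS ρ fun t ↦ ?_,
    isCompact_filledHull hρ, isFilled_filledHull _,
    isUniformlyLocPathConnected_filledHull hρ.isClosed
      (isUniformlyLocPathConnected_range ρ.continuous),
    fun t ↦ subset_filledHull _ ?_, fun t ↦ subset_filledHull _ ?_⟩
  · exact union_subset (range_subset_iff.2 hγ) (range_subset_iff.2 hγ') (hrange ▸ mem_range_self t)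
  · exact hrange ▸ .inl ⟨t, rfl⟩
  · exact hrange ▸ .inr ⟨t, rfl⟩

theorem joinedIn_inter_inter_of_isSimplyConnected (h₀ : IsSimplyConnected S₀)
    (h₁ : IsSimplyConnected S₁) (h₂ : IsSimplyConnected S₂) (h₀₁ : JoinedIn (S₀ ∩ S₁) x y)
    (h₀₂ : JoinedIn (S₀ ∩ S₂) x y) (h₁₂ : JoinedIn (S₁ ∩ S₂) x y) :
    JoinedIn (S₀ ∩ S₁ ∩ S₂) x y := by
  obtain ⟨α, hα⟩ := h₀₁
  obtain ⟨β, hβ⟩ := h₀₂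
  obtain ⟨γ, hγ⟩ := h₁₂
  obtain ⟨Z₀, hZS₀, hZ₀, hfill₀, hloc₀, hα₀, hβ₀⟩ :=
    exists_isFilled_of_isSimplyConnected h₀ α β (fun t ↦ (hα t).1) fun t ↦ (hβ t).1
  obtain ⟨Z₁, hZS₁, hZ₁, hfill₁, hloc₁, hα₁, hγ₁⟩ :=
    exists_isFilled_of_isSimplyConnected h₁ α γ (fun t ↦ (hα t).2) fun t ↦ (hγ t).1
  obtain ⟨Z₂, hZS₂, hZ₂, hfill₂, hloc₂, hβ₂, hγ₂⟩ :=
    exists_isFilled_of_isSimplyConnected h₂ β γ (fun t ↦ (hβ t).2) fun t ↦ (hγ t).2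
  exact (joinedIn_inter_inter_of_isFilled hZ₀ hZ₁ hZ₂ hfill₀ hfill₁ hfill₂ hloc₀ hloc₁ hloc₂
    ⟨α, fun t ↦ ⟨hα₀ t, hα₁ t⟩⟩ ⟨β, fun t ↦ ⟨hβ₀ t, hβ₂ t⟩⟩ ⟨γ, fun t ↦ ⟨hγ₁ t, hγ₂ t⟩⟩).mono
    (inter_subset_inter (inter_subset_inter hZS₀ hZS₁) hZS₂)

theorem isSimplyConnected_inter_inter_complex (h₀ : IsSimplyConnected S₀)
    (h₁ : IsSimplyConnected S₁) (h₂ : IsSimplyConnected S₂) (h₀₁ : IsPathConnected (S₀ ∩ S₁))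
    (h₀₂ : IsPathConnected (S₀ ∩ S₂)) (h₁₂ : IsPathConnected (S₁ ∩ S₂))
    (hne : (S₀ ∩ S₁ ∩ S₂).Nonempty) : IsSimplyConnected (S₀ ∩ S₁ ∩ S₂) := by
  refine isSimplyConnected_iff_exists_homotopy_refl_forall_mem.2
    ⟨isPathConnected_iff.2 ⟨hne, fun x hx y hy ↦ ?_⟩, fun x γ hγ ↦ ?_⟩
  · exact joinedIn_inter_inter_of_isSimplyConnected h₀ h₁ h₂ (h₀₁.joinedIn x hx.1 y hy.1)
      (h₀₂.joinedIn x ⟨hx.1.1, hx.2⟩ y ⟨hy.1.1, hy.2⟩)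
      (h₁₂.joinedIn x ⟨hx.1.2, hx.2⟩ y ⟨hy.1.2, hy.2⟩)
  · obtain ⟨F, hF⟩ := exists_homotopy_refl_forall_mem_filledHull γ
    have hull₀ := filledHull_range_subset_of_isSimplyConnected h₀ γ fun t ↦ (hγ t).1.1
    have hull₁ := filledHull_range_subset_of_isSimplyConnected h₁ γ fun t ↦ (hγ t).1.2
    have hull₂ := filledHull_range_subset_of_isSimplyConnected h₂ γ fun t ↦ (hγ t).2
    exact ⟨F, fun z ↦ ⟨⟨hull₀ (hF z), hull₁ (hF z)⟩, hull₂ (hF z)⟩⟩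

theorem intersection_three_simply_connected_general {E : Type*} [NormedAddCommGroup E]
    [NormedSpace ℝ E] (hE : Module.finrank ℝ E = 2) {S₀ S₁ S₂ : Set E}
    (h₀ : IsSimplyConnected S₀) (h₁ : IsSimplyConnected S₁) (h₂ : IsSimplyConnected S₂)
    (h₀₁ : IsPathConnected (S₀ ∩ S₁)) (h₀₂ : IsPathConnected (S₀ ∩ S₂))
    (h₁₂ : IsPathConnected (S₁ ∩ S₂)) (hne : (S₀ ∩ S₁ ∩ S₂).Nonempty) :
    IsSimplyConnected (S₀ ∩ S₁ ∩ S₂) := by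
  have : FiniteDimensional ℝ E := Module.finite_of_finrank_pos (by omega)
  let e : E ≃ₜ ℂ :=
    (ContinuousLinearEquiv.ofFinrankEq (hE.trans Complex.finrank_real_complex.symm)).toHomeomorph
  have he (A B : Set E) : e '' (A ∩ B) = e '' A ∩ e '' B := image_inter e.injective
  rw [← e.isSimplyConnected_image, he, he]
  refine isSimplyConnected_inter_inter_complex (e.isSimplyConnected_image.2 h₀)
    (e.isSimplyConnected_image.2 h₁) (e.isSimplyConnected_image.2 h₂) ?_ ?_ ?_ ?_ <;>
    simp only [← he]
  exacts [h₀₁.image e.continuous, h₀₂.image e.continuous, h₁₂.image e.continuous, hne.image e]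

end TripleIntersection

/-- **Intersection of three simply connected compacta in the plane.**
If `S₀, S₁, S₂` are simply connected compact subsets of the plane `ℝ²` such that
the intersection of any two of them is path connected and `S₀ ∩ S₁ ∩ S₂ ≠ ∅`,
then `S₀ ∩ S₁ ∩ S₂` is simply connected. -/
theorem intersection_three_simply_connected
    (S₀ S₁ S₂ : Set (EuclideanSpace ℝ (Fin 2)))
    (hc₀ : IsCompact S₀) (hc₁ : IsCompact S₁) (hc₂ : IsCompact S₂)
    (hs₀ : SimplyConnectedSpace S₀) (hs₁ : SimplyConnectedSpace S₁)
    (hs₂ : SimplyConnectedSpace S₂)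
    (h01 : IsPathConnected (S₀ ∩ S₁)) (h02 : IsPathConnected (S₀ ∩ S₂))
    (h12 : IsPathConnected (S₁ ∩ S₂))
    (hne : (S₀ ∩ S₁ ∩ S₂).Nonempty) :
    SimplyConnectedSpace ↥(S₀ ∩ S₁ ∩ S₂) :=
  intersection_three_simply_connected_general finrank_euclideanSpace_fin hs₀ hs₁ hs₂ h01 h02 h12 hne
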